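/- arXiv:1302.3866 — 3 statements merged into one kernel-verified Lean document; each statement's English description precedes it below -/
import Mathlib

section
/- Let A satisfy (H1), β_1,...,β_n > -2, and let u be a solution of the singular Liouville system. Then there exist constants c_1,...,c_n such that for every x ∈ ℝ² and every i ∈ I, u_i(x) = -(1/(2π)) ∫_{ℝ²} log|x−y| Σ_{j=1}^n a_{ij} |y|^{β_j} e^{u_j(y)} dy + c_i. -/
open Set MeasureTheory

/-- Hypothesis (H1): symmetric, nonnegative entries, irreducible, invertible. -/
def H1 {n : ℕ} (A : Matrix (Fin n) (Fin n) ℝ) : Prop :=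
  A.IsSymm ∧ (∀ i j, 0 ≤ A i j) ∧
  (∀ S : Finset (Fin n), S.Nonempty → S ≠ Finset.univ → ∃ i ∈ S, ∃ j ∈ Sᶜ, A i j ≠ 0) ∧
  IsUnit A.det

/-- The Euclidean norm on ℝ². -/
noncomputable def nrm (x : ℝ × ℝ) : ℝ := Real.sqrt (x.1 ^ 2 + x.2 ^ 2)

/-- The Laplacian on ℝ²: sum of the two second partial derivatives. -/
noncomputable def lap (u : ℝ × ℝ → ℝ) (x : ℝ × ℝ) : ℝ :=
  deriv (deriv (fun s => u (s, x.2))) x.1 + deriv (deriv (fun t => u (x.1, t))) x.2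

/-- Solution (not necessarily radial) of the singular Liouville system on ℝ²
with the finite-energy condition. -/
def PDESolution {n : ℕ} (A : Matrix (Fin n) (Fin n) ℝ) (β : Fin n → ℝ)
    (u : Fin n → ℝ × ℝ → ℝ) : Prop :=
  (∀ i, Continuous (u i)) ∧
  (∀ i, ∀ x : ℝ × ℝ, x ≠ 0 → ContDiffAt ℝ 2 (u i) x) ∧
  (∀ i, ∀ x : ℝ × ℝ, x ≠ 0 →
      lap (u i) x + ∑ j, A i j * nrm x ^ β j * Real.exp (u j x) = 0) ∧
  (∀ i, Integrable (fun x : ℝ × ℝ => nrm x ^ β i * Real.exp (u i x)))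

/-!
For `fᵢ = ∑ⱼ aᵢⱼ |y|^βⱼ exp uⱼ` and the normalized kernel `k(z, y) = log |z - y| - log (1 + |y|)`,
the potential `Nᵢ(z) = (2π)⁻¹ ∫ k(z, y) fᵢ(y) dy` converges absolutely, and `uᵢ + Nᵢ` is harmonic
off the origin.  Jensen's formula gives the mean value property of `uᵢ + Nᵢ` over balls at every
centre (the singularity at the origin being removable because `uᵢ` is continuous).  Since
`t ≤ exp t`, the function `uᵢ + Nᵢ` is bounded above by an integrable function plus a multiple of
`log (1 + |z|)`, so comparing its means over balls about two centres, as in Liouville's theorem,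
shows that it is constant.

It remains to see that the normalization `log (1 + |y|)` can be integrated separately against `fᵢ`.
As `uᵢ = cᵢ - Nᵢ ≥ cᵢ - mᵢ log (1 + |z|)` with `mᵢ = (2π)⁻¹ ∫ fᵢ`, finite energy forces
`mᵢ > βᵢ + 2`.  Conversely Jensen's inequality for the potential of the tail of `fᵢ` bounds
`|z|^βᵢ exp uᵢ` at infinity by `|z|^(-2 - δ)` times one plus the convolution of `fᵢ` with a
truncated `|z|⁻¹`, and this leaves room for a logarithm.
-/

namespace SingularLiouville

open Filter Metric Real Topology

section PolarCoordinates

variable {E : Type*} [NormedAddCommGroup E] [NormedSpace ℝ E] {g : ℂ → E}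

theorem integrableOn_polarCoord_symm (hg : Integrable g) :
    IntegrableOn (fun p : ℝ × ℝ => p.1 • g (Complex.polarCoord.symm p))
      polarCoord.target := by
  have hreal : Integrable (fun q : ℝ × ℝ => g (Complex.measurableEquivRealProd.symm q)) :=
    Complex.volume_preserving_equiv_real_prod.symm.integrable_comp_of_integrable hg
  have hpolar := (integrableOn_image_iff_integrableOn_abs_det_fderiv_smul volume
    polarCoord.open_target.measurableSet
    (fun p _ => (hasFDerivAt_polarCoord_symm p).hasFDerivWithinAt)
    polarCoord.symm.injOn _).1 hreal.integrableOn
  refine hpolar.congr_fun (fun p hp => ?_) polarCoord.open_target.measurableSet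
  simp only [det_fderivPolarCoordSymm, abs_of_pos (mem_Ioi.1 hp.1),
    Complex.measurableEquivRealProd_symm_polarCoord_symm_apply]

theorem setIntegral_Ioo_polarCoord_symm (g : ℂ → E) (x : ℂ) (s : ℝ) :
    ∫ t in Ioo (-π) π, g (Complex.polarCoord.symm (s, t) + x) =
      (2 * π) • circleAverage g x s := by
  have hpoint (t : ℝ) : Complex.polarCoord.symm (s, t) + x = circleMap x s t := by
    simp [circleMap, Complex.exp_mul_I, add_comm x]
  rw [circleAverage_eq_integral_add (-π),
    intervalIntegral.integral_comp_add_right (fun t => g (circleMap x s t)),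
    smul_inv_smul₀ two_pi_pos.ne', zero_add, show 2 * π + -π = π by ring,
    intervalIntegral.integral_of_le (by linarith [pi_pos]), integral_Ioc_eq_integral_Ioo]
  simp only [hpoint]

theorem integrableOn_and_integral_eq_circleAverage (hg : Integrable g) (x : ℂ) :
    IntegrableOn (fun s => s • circleAverage g x s) (Ioi 0) ∧
      ∫ y, g y = (2 * π) • ∫ s in Ioi 0, s • circleAverage g x s := by
  have hI := integrableOn_polarCoord_symm (hg.comp_add_right x)
  have hE := Complex.integral_comp_polarCoord_symm (fun y => g (y + x))
  have hprod : (volume : Measure (ℝ × ℝ)).restrict polarCoord.target =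
      (volume.restrict (Ioi 0)).prod (volume.restrict (Ioo (-π) π)) := by
    rw [Measure.prod_restrict]; rfl
  have hangle (s : ℝ) : ∫ t in Ioo (-π) π, s • g (Complex.polarCoord.symm (s, t) + x) =
      (2 * π) • s • circleAverage g x s := by
    rw [integral_smul, setIntegral_Ioo_polarCoord_symm, smul_comm]
  rw [integral_add_right_eq_self, hprod] at hE
  rw [IntegrableOn, hprod] at hI
  refine ⟨?_, ?_⟩
  · have hint := hI.integral_prod_left
    simp only [hangle] at hint
    exact (integrable_smul_iff two_pi_pos.ne' _).1 hint
  · rw [← hE, integral_prod _ hI, ← integral_smul]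
    simp only [hangle]

theorem integrableOn_and_setIntegral_norm_sub_mem {x : ℂ} {S : Set ℝ} (hS : MeasurableSet S)
    (hS₀ : S ⊆ Ioi 0) (hg : IntegrableOn g {y | ‖y - x‖ ∈ S}) :
    IntegrableOn (fun s => s • circleAverage g x s) S ∧
      ∫ y in {y | ‖y - x‖ ∈ S}, g y = (2 * π) • ∫ s in S, s • circleAverage g x s := by
  have hT : MeasurableSet {y : ℂ | ‖y - x‖ ∈ S} :=
    (by fun_prop : Measurable fun y : ℂ => ‖y - x‖) hS
  obtain ⟨hI, hE⟩ := integrableOn_and_integral_eq_circleAverage (hg.integrable_indicator hT) x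
  have hind : EqOn (fun s => s • circleAverage ({y | ‖y - x‖ ∈ S}.indicator g) x s)
      (S.indicator fun s => s • circleAverage g x s) (Ioi 0) := by
    intro s hs
    have hmem : ∀ y ∈ sphere x |s|, y ∈ {y | ‖y - x‖ ∈ S} ↔ s ∈ S := by
      intro y hy
      rw [mem_sphere_iff_norm, abs_of_pos hs] at hy
      simp [hy]
    by_cases hsS : s ∈ S
    · simp only [indicator_of_mem hsS]
      exact congrArg (s • ·) (circleAverage_congr_sphere fun y hy =>
        indicator_of_mem ((hmem y hy).2 hsS) g)
    · simp only [indicator_of_notMem hsS]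
      rw [circleAverage_congr_sphere (f₂ := fun _ => 0) fun y hy =>
        indicator_of_notMem (mt (hmem y hy).1 hsS) g]
      simp [circleAverage]
  constructor
  · have hint := hI.congr_fun hind measurableSet_Ioi
    rwa [IntegrableOn, integrable_indicator_iff hS, IntegrableOn, Measure.restrict_restrict hS,
      inter_eq_left.2 hS₀] at hint
  · rw [← integral_indicator hT, hE, setIntegral_congr_fun measurableSet_Ioi hind,
      setIntegral_indicator hS, inter_eq_right.2 hS₀]

theorem integrableOn_and_setIntegral_ball {x : ℂ} {R : ℝ} (hg : IntegrableOn g (ball x R)) :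
    IntegrableOn (fun s => s • circleAverage g x s) (Ioo 0 R) ∧
      ∫ y in ball x R, g y = (2 * π) • ∫ s in Ioo 0 R, s • circleAverage g x s := by
  have hball : {y : ℂ | ‖y - x‖ ∈ Ioo 0 R} =ᵐ[volume] ball x R := by
    have : {y : ℂ | ‖y - x‖ ∈ Ioo 0 R} = ball x R \ {x} := by
      ext y
      simp [sub_eq_zero, dist_eq_norm, and_comm]
    rw [this]
    exact sdiff_null_ae_eq_self (by simp)
  rw [← setIntegral_congr_set hball]
  exact integrableOn_and_setIntegral_norm_sub_mem measurableSet_Ioo (fun s hs => hs.1)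
    (hg.congr_set_ae hball)

end PolarCoordinates

section Green

open InnerProductSpace Laplacian

theorem hasDerivAt_circleMap_radius (x : ℂ) (s t : ℝ) :
    HasDerivAt (fun s => circleMap x s t) (circleMap 0 1 t) s := by
  have hline : (fun s => circleMap x s t) = fun s : ℝ => x + s • circleMap 0 1 t := by
    ext s; simp [circleMap]
  rw [hline]
  simpa using ((hasDerivAt_id s).smul_const (circleMap 0 1 t)).const_add x

theorem apply_circleMap_add_apply_circleMap_mul_I (B : ℂ →L[ℝ] ℂ →L[ℝ] ℝ) (t : ℝ) :
    B (circleMap 0 1 t) (circleMap 0 1 t) +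
      B (circleMap 0 1 t * Complex.I) (circleMap 0 1 t * Complex.I) =
      B 1 1 + B Complex.I Complex.I := by
  have h : circleMap 0 1 t = cos t • (1 : ℂ) + sin t • Complex.I := by
    simp [circleMap, Complex.exp_mul_I]
  have hI : circleMap 0 1 t * Complex.I = -sin t • (1 : ℂ) + cos t • Complex.I := by
    rw [h]
    apply Complex.ext <;> simp
  rw [hI, h]
  simp only [map_add, map_smul, add_apply, smul_apply, smul_eq_mul, map_neg, neg_apply, neg_smul]
  linear_combination (B 1 1 + B Complex.I Complex.I) * sin_sq_add_cos_sq t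

theorem continuousOn_log_div {a b : ℝ} (ha : 0 < a) (hab : a ≤ b) :
    ContinuousOn (fun s => log (b / s)) (Icc a b) := by
  have hb := ha.trans_le hab
  refine ContinuousOn.log (continuousOn_const.div continuousOn_id fun s hs => ?_) fun s hs => ?_
  · exact (ha.trans_le hs.1).ne'
  · exact (div_pos hb (ha.trans_le hs.1)).ne'

theorem sub_eq_log_mul_add_integral_log_mul {g g' q' : ℝ → ℝ} {a b : ℝ} (ha : 0 < a)
    (hab : a ≤ b) (hg : ∀ s ∈ Icc a b, HasDerivAt g (g' s) s)
    (hq : ∀ s ∈ Icc a b, HasDerivAt (fun s => s * g' s) (q' s) s)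
    (hc : ContinuousOn q' (Icc a b)) :
    g b - g a = log (b / a) * (a * g' a) + ∫ s in a..b, log (b / s) * q' s := by
  have hb : b ≠ 0 := (ha.trans_le hab).ne'
  have hderiv : ∀ s ∈ uIcc a b,
      HasDerivAt (fun s => g s + log (b / s) * (s * g' s)) (log (b / s) * q' s) s := by
    intro s hs
    rw [uIcc_of_le hab] at hs
    have hs₀ : s ≠ 0 := (ha.trans_le hs.1).ne'
    have hlog := ((hasDerivAt_inv hs₀).const_mul b).log (mul_ne_zero hb (inv_ne_zero hs₀))
    refine ((hg s hs).add (hlog.mul (hq s hs))).congr_deriv ?_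
    field_simp
    ring
  have hint := ((continuousOn_log_div ha hab).mul hc).intervalIntegrable_of_Icc hab (μ := volume)
  have hFTC := intervalIntegral.integral_eq_sub_of_hasDerivAt hderiv hint
  rw [hFTC, div_self hb, log_one]
  ring

section SecondDerivative

variable {E F : Type*} [NormedAddCommGroup E] [NormedSpace ℝ E] [NormedAddCommGroup F]
  [NormedSpace ℝ F] {V : E → F}

theorem differentiableAt_fderiv {z : E} (hV : ContDiffAt ℝ 2 V z) :
    DifferentiableAt ℝ (fderiv ℝ V) z :=
  (hV.fderiv_right (m := 1) (by norm_num)).differentiableAt (by norm_num)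

theorem continuousAt_fderiv_fderiv {z : E} (hV : ContDiffAt ℝ 2 V z) :
    ContinuousAt (fderiv ℝ (fderiv ℝ V)) z :=
  ((hV.fderiv_right (m := 1) (by norm_num)).fderiv_right (m := 0) (by norm_num)).continuousAt

theorem deriv_deriv_comp_eq_fderiv_fderiv {γ : ℝ → E} {v : E} {s : ℝ}
    (hV : ContDiffAt ℝ 2 V (γ s)) (hγ : ∀ r, HasDerivAt γ v r) :
    deriv (deriv fun r => V (γ r)) s = fderiv ℝ (fderiv ℝ V) (γ s) v v := by
  have hfirst : deriv (fun r => V (γ r)) =ᶠ[𝓝 s] fun r => fderiv ℝ V (γ r) v := by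
    filter_upwards [(hγ s).continuousAt.eventually (hV.eventually (by simp))] with r hr
    exact ((hr.differentiableAt two_ne_zero).hasFDerivAt.comp_hasDerivAt r (hγ r)).deriv
  have hsecond := ((differentiableAt_fderiv hV).hasFDerivAt.comp_hasDerivAt s (hγ s)).clm_apply
    (hasDerivAt_const s v)
  rw [hfirst.deriv_eq]
  simpa using hsecond.deriv

theorem laplacian_eq_fderiv_fderiv (V : ℂ → F) (z : ℂ) :
    Δ V z = fderiv ℝ (fderiv ℝ V) z 1 1 + fderiv ℝ (fderiv ℝ V) z Complex.I Complex.I := by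
  simp [laplacian_eq_iteratedFDeriv_complexPlane, iteratedFDeriv_two_apply]

end SecondDerivative

/-- The derivative `∂ₛ(s ∂ₛU)` of the radial flux of `U` in polar coordinates `(s, t)` about
`x`; it differs from `s ΔU` by the angular derivative `s⁻¹ ∂ₜ²U`. -/
noncomputable def radialFluxDeriv (U : ℂ → ℝ) (x : ℂ) (s t : ℝ) : ℝ :=
  fderiv ℝ U (circleMap x s t) (circleMap 0 1 t) +
    s * fderiv ℝ (fderiv ℝ U) (circleMap x s t) (circleMap 0 1 t) (circleMap 0 1 t)

variable {U : ℂ → ℝ} {x : ℂ}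

theorem hasDerivAt_radial {s t : ℝ} (hU : DifferentiableAt ℝ U (circleMap x s t)) :
    HasDerivAt (fun s => U (circleMap x s t))
      (fderiv ℝ U (circleMap x s t) (circleMap 0 1 t)) s :=
  hU.hasFDerivAt.comp_hasDerivAt s (hasDerivAt_circleMap_radius x s t)

theorem hasDerivAt_radialFlux {s t : ℝ}
    (hU : DifferentiableAt ℝ (fderiv ℝ U) (circleMap x s t)) :
    HasDerivAt (fun s => s * fderiv ℝ U (circleMap x s t) (circleMap 0 1 t))
      (radialFluxDeriv U x s t) s := by
  have hD := hU.hasFDerivAt.comp_hasDerivAt s (hasDerivAt_circleMap_radius x s t)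
  refine ((hasDerivAt_id s).mul (hD.clm_apply (hasDerivAt_const s (circleMap 0 1 t)))).congr_deriv
    ?_
  simp [radialFluxDeriv]

theorem continuousAt_radialFluxDeriv {s t : ℝ} (hU : ContDiffAt ℝ 2 U (circleMap x s t)) :
    ContinuousAt (fun p : ℝ × ℝ => radialFluxDeriv U x p.1 p.2) (s, t) := by
  have hcirc : Continuous fun p : ℝ × ℝ => circleMap x p.1 p.2 := by unfold circleMap; fun_prop
  have hdir : ContinuousAt (fun p : ℝ × ℝ => circleMap 0 1 p.2) (s, t) := by fun_prop
  have hD : ContinuousAt (fun p : ℝ × ℝ => fderiv ℝ U (circleMap x p.1 p.2)) (s, t) :=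
    (differentiableAt_fderiv hU).continuousAt.comp (f := fun p : ℝ × ℝ => circleMap x p.1 p.2)
      hcirc.continuousAt
  have hDD : ContinuousAt (fun p : ℝ × ℝ => fderiv ℝ (fderiv ℝ U) (circleMap x p.1 p.2)) (s, t) :=
    (continuousAt_fderiv_fderiv hU).comp (f := fun p : ℝ × ℝ => circleMap x p.1 p.2)
      hcirc.continuousAt
  exact (hD.clm_apply hdir).add
    (continuousAt_fst.mul ((hDD.clm_apply hdir).clm_apply hdir))

theorem hasDerivAt_angularFlux {s t : ℝ} (hU : ContDiffAt ℝ 2 U (circleMap x s t)) :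
    HasDerivAt (fun t => fderiv ℝ U (circleMap x s t) (circleMap 0 1 t * Complex.I))
      (s * Δ U (circleMap x s t) - radialFluxDeriv U x s t) t := by
  have hD := (differentiableAt_fderiv hU).hasFDerivAt.comp_hasDerivAt t (hasDerivAt_circleMap x s t)
  refine (hD.clm_apply ((hasDerivAt_circleMap 0 1 t).mul_const Complex.I)).congr_deriv ?_
  have hs : circleMap 0 s t * Complex.I = s • (circleMap 0 1 t * Complex.I) := by
    simp [circleMap, mul_assoc]
  rw [mul_assoc (circleMap 0 1 t), Complex.I_mul_I, hs, laplacian_eq_fderiv_fderiv,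
    ← apply_circleMap_add_apply_circleMap_mul_I _ t, radialFluxDeriv]
  simp only [Function.comp_apply, map_smul, smul_apply, smul_eq_mul, mul_neg, mul_one, map_neg]
  ring

theorem continuousOn_laplacian {S : Set ℂ} (hU : ∀ z ∈ S, ContDiffAt ℝ 2 U z) :
    ContinuousOn (Δ U) S := by
  intro z hz
  have hDD := continuousAt_fderiv_fderiv (hU z hz)
  rw [show Δ U = _ from funext (laplacian_eq_fderiv_fderiv U)]
  exact (((hDD.clm_apply continuousAt_const).clm_apply continuousAt_const).add
    ((hDD.clm_apply continuousAt_const).clm_apply continuousAt_const)).continuousWithinAt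

theorem continuous_comp_circleMap {F : ℂ → ℝ} {s : ℝ} (hF : ContinuousOn F (sphere x |s|)) :
    Continuous fun t => F (circleMap x s t) :=
  hF.comp_continuous (continuous_circleMap x s) (circleMap_mem_sphere' x s)

theorem integral_radialFluxDeriv {s : ℝ} (hU : ∀ z ∈ sphere x |s|, ContDiffAt ℝ 2 U z) :
    ∫ t in 0..2 * π, radialFluxDeriv U x s t = 2 * π * (s * circleAverage (Δ U) x s) := by
  have hUt (t : ℝ) := hU _ (circleMap_mem_sphere' x s t)
  have hK : Continuous (radialFluxDeriv U x s) := continuous_iff_continuousAt.2 fun t =>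
    (continuousAt_radialFluxDeriv (hUt t)).comp (f := fun t => (s, t)) (by fun_prop)
  have hΔ := continuous_comp_circleMap (continuousOn_laplacian hU)
  have hperiod := intervalIntegral.integral_eq_sub_of_hasDerivAt
    (fun t (_ : t ∈ uIcc 0 (2 * π)) => hasDerivAt_angularFlux (hUt t))
    (((hΔ.const_mul s).sub hK).intervalIntegrable 0 (2 * π))
  rw [intervalIntegral.integral_sub ((hΔ.const_mul s).intervalIntegrable _ _)
    (hK.intervalIntegrable _ _), intervalIntegral.integral_const_mul,
    (periodic_circleMap x s).eq, (periodic_circleMap 0 1).eq, sub_self, sub_eq_zero] at hperiod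
  rw [← hperiod, circleAverage_def, smul_eq_mul]
  field_simp

/-- The flux of `∇U` through the circle of center `x` and radius `s`, divided by `2π`. -/
noncomputable def meanFlux (U : ℂ → ℝ) (x : ℂ) (s : ℝ) : ℝ :=
  (2 * π)⁻¹ * ∫ t in 0..2 * π, s * fderiv ℝ U (circleMap x s t) (circleMap 0 1 t)

variable {a b : ℝ}

theorem integral_integral_log_mul_radialFluxDeriv (ha : 0 < a) (hab : a ≤ b)
    (hU : ∀ z, ‖z - x‖ ∈ Icc a b → ContDiffAt ℝ 2 U z) :
    ∫ t in 0..2 * π, ∫ s in a..b, log (b / s) * radialFluxDeriv U x s t =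
      2 * π * ∫ s in a..b, log (b / s) * (s * circleAverage (Δ U) x s) := by
  have hcont : ContinuousOn (fun p : ℝ × ℝ => log (b / p.1) * radialFluxDeriv U x p.1 p.2)
      (Icc a b ×ˢ Icc 0 (2 * π)) := by
    refine ((continuousOn_log_div ha hab).comp continuousOn_fst fun p hp => hp.1).mul
      fun p hp => (continuousAt_radialFluxDeriv (hU _ ?_)).continuousWithinAt
    simpa [abs_of_pos (ha.trans_le hp.1.1)] using hp.1
  have hint := (hcont.integrableOn_compact (μ := volume)
    (isCompact_Icc.prod isCompact_Icc)).mono_set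
    (prod_mono Ioc_subset_Icc_self Ioc_subset_Icc_self)
  rw [← uIoc_of_le hab, ← uIoc_of_le two_pi_pos.le] at hint
  rw [← intervalIntegral_intervalIntegral_swap
    (F := fun s t => log (b / s) * radialFluxDeriv U x s t) hint,
    ← intervalIntegral.integral_const_mul]
  refine intervalIntegral.integral_congr fun s hs => ?_
  rw [uIcc_of_le hab] at hs
  have hUs : ∀ z ∈ sphere x |s|, ContDiffAt ℝ 2 U z := fun z hz => hU z <| by
    rwa [mem_sphere_iff_norm.1 hz, abs_of_pos (ha.trans_le hs.1)]
  simp only [intervalIntegral.integral_const_mul, integral_radialFluxDeriv hUs]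
  ring

theorem circleAverage_sub_circleAverage (ha : 0 < a) (hab : a ≤ b)
    (hU : ∀ z, ‖z - x‖ ∈ Icc a b → ContDiffAt ℝ 2 U z) :
    circleAverage U x b - circleAverage U x a = log (b / a) * meanFlux U x a +
      ∫ s in a..b, log (b / s) * (s * circleAverage (Δ U) x s) := by
  have hUt {s : ℝ} (hs : s ∈ Icc a b) (t : ℝ) : ContDiffAt ℝ 2 U (circleMap x s t) :=
    hU _ (by simpa [abs_of_pos (ha.trans_le hs.1)] using hs)
  have hcont {s : ℝ} (hs : s ∈ Icc a b) : Continuous fun t => U (circleMap x s t) :=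
    continuous_iff_continuousAt.2 fun t =>
      (hUt hs t).continuousAt.comp (continuous_circleMap x s).continuousAt
  have hflux : Continuous fun t => a * fderiv ℝ U (circleMap x a t) (circleMap 0 1 t) :=
    continuous_iff_continuousAt.2 fun t => continuousAt_const.mul <|
      (((differentiableAt_fderiv (hUt ⟨le_rfl, hab⟩ t)).continuousAt).comp
        (continuous_circleMap x a).continuousAt).clm_apply (by fun_prop)
  have hradial (t : ℝ) : U (circleMap x b t) - U (circleMap x a t) -
      log (b / a) * (a * fderiv ℝ U (circleMap x a t) (circleMap 0 1 t)) =
      ∫ s in a..b, log (b / s) * radialFluxDeriv U x s t := by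
    rw [sub_eq_log_mul_add_integral_log_mul ha hab
      (fun s hs => hasDerivAt_radial ((hUt hs t).differentiableAt two_ne_zero))
      (fun s hs => hasDerivAt_radialFlux (differentiableAt_fderiv (hUt hs t)))
      fun s hs => ((continuousAt_radialFluxDeriv (hUt hs t)).comp (f := fun s => (s, t))
        (by fun_prop)).continuousWithinAt]
    ring
  have hmean := integral_integral_log_mul_radialFluxDeriv ha hab hU
  simp only [← hradial] at hmean
  have hib := (hcont ⟨hab, le_rfl⟩).intervalIntegrable (μ := volume) 0 (2 * π)
  have hia := (hcont ⟨le_rfl, hab⟩).intervalIntegrable (μ := volume) 0 (2 * π)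
  rw [intervalIntegral.integral_sub (hib.sub hia)
    ((hflux.intervalIntegrable _ _).const_mul _), intervalIntegral.integral_sub hib hia,
    intervalIntegral.integral_const_mul] at hmean
  rw [circleAverage_def, circleAverage_def, meanFlux, ← sub_eq_iff_eq_add', ← smul_sub, smul_eq_mul,
    mul_left_comm, ← mul_sub, hmean, inv_mul_cancel_left₀ two_pi_pos.ne']

end Green

section LogAffine

theorem exists_eq_add_mul_log {ψ : ℝ → ℝ} {s : Set ℝ} (hs : s ⊆ Ioi 0)
    (h : ∀ a ∈ s, ∃ B, ∀ b ∈ s, a ≤ b → ψ b - ψ a = B * log (b / a)) :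
    ∃ C B, ∀ r ∈ s, ψ r = C + B * log r := by
  by_cases hsub : s.Subsingleton
  · rcases s.eq_empty_or_nonempty with rfl | ⟨p, hp⟩
    · simp
    · exact ⟨ψ p, 0, fun r hr => by simp [hsub hr hp]⟩
  obtain ⟨p, hp, q, hq, hpq⟩ := (not_subsingleton_iff.1 hsub).exists_lt
  have hlog : log p < log q := log_lt_log (hs hp) hpq
  set B := (ψ q - ψ p) / (log q - log p)
  refine ⟨ψ p - B * log p, B, fun r hr => ?_⟩
  have hm : min r p ∈ s := by rcases min_choice r p with h | h <;> simpa only [h]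
  obtain ⟨B', hB'⟩ := h _ hm
  have hB (b : ℝ) (hb : b ∈ s) (hle : min r p ≤ b) :
      ψ b - ψ (min r p) = B' * (log b - log (min r p)) := by
    rw [hB' b hb hle, log_div (hs hb).ne' (hs hm).ne']
  have hBr := hB r hr (min_le_left _ _)
  have hBp := hB p hp (min_le_right _ _)
  have hBq := hB q hq ((min_le_right _ _).trans hpq.le)
  have hBB' : B = B' := by
    rw [div_eq_iff (sub_pos.2 hlog).ne']
    linarith
  rw [hBB']
  linarith

theorem eq_of_continuousAt_zero_of_eq_add_mul_log {ψ : ℝ → ℝ} (hψ : ContinuousAt ψ 0)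
    {ρ C B : ℝ} (hρ : 0 < ρ) (h : ∀ r ∈ Ioo 0 ρ, ψ r = C + B * log r) :
    ∀ r ∈ Ioo 0 ρ, ψ r = ψ 0 := by
  have hψ₀ : Tendsto ψ (𝓝[>] 0) (𝓝 (ψ 0)) := hψ.tendsto.mono_left nhdsWithin_le_nhds
  have hquot : Tendsto (fun r => (ψ r - C) / log r) (𝓝[>] 0) (𝓝 0) :=
    (hψ₀.sub_const C).div_atBot tendsto_log_nhdsGT_zero
  have hB : B = 0 := by
    refine tendsto_nhds_unique (tendsto_const_nhds.congr' ?_) hquot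
    filter_upwards [Ioo_mem_nhdsGT (lt_min hρ one_pos)] with r hr
    obtain ⟨hrρ, hr₁⟩ := lt_min_iff.1 hr.2
    rw [h r ⟨hr.1, hrρ⟩, add_sub_cancel_left, mul_div_cancel_right₀ _ (log_neg hr.1 hr₁).ne]
  have hC : C = ψ 0 := by
    refine tendsto_nhds_unique (tendsto_const_nhds.congr' ?_) hψ₀
    filter_upwards [Ioo_mem_nhdsGT hρ] with r hr
    rw [h r hr, hB, zero_mul, add_zero]
  intro r hr
  rw [h r hr, hB, hC, zero_mul, add_zero]

theorem posLog_mul_inv {r ρ : ℝ} (hr : 0 ≤ r) (hρ : 0 < ρ) :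
    log⁺ (r * ρ⁻¹) = if ρ ≤ r then log (r / ρ) else 0 := by
  rw [← div_eq_mul_inv]
  split_ifs with h
  · rw [posLog_eq_log]
    rwa [abs_of_nonneg (by positivity), one_le_div hρ]
  · rw [posLog_eq_zero_iff, abs_of_nonneg (by positivity), div_le_one hρ]
    exact (not_le.1 h).le

theorem exists_eq_add_mul_posLog {ψ : ℝ → ℝ} (hψ : Continuous ψ) {ρ : ℝ} (hρ : 0 ≤ ρ)
    (h : ∀ a, 0 < a → ∃ B, ∀ b, a ≤ b → ρ ∉ Icc a b → ψ b - ψ a = B * log (b / a)) :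
    ∃ c, ∀ r, 0 < r → ψ r = ψ 0 + c * log⁺ (r * ρ⁻¹) := by
  have haffine {s : Set ℝ} (hs : s.OrdConnected) (hs₀ : s ⊆ Ioi 0) (hρs : ρ ∉ s) :
      ∃ C B, ∀ r ∈ s, ψ r = C + B * log r := by
    refine exists_eq_add_mul_log hs₀ fun a ha => ?_
    obtain ⟨B, hB⟩ := h a (hs₀ ha)
    exact ⟨B, fun b hb hab => hB b hab fun hmem => hρs (hs.out ha hb hmem)⟩
  obtain ⟨C, B, hout⟩ := haffine (s := Ioi ρ) ordConnected_Ioi (Ioi_subset_Ioi hρ) (by simp)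
  rcases hρ.eq_or_lt with rfl | hρ
  · refine ⟨0, fun r hr => ?_⟩
    rw [zero_mul, add_zero]
    exact eq_of_continuousAt_zero_of_eq_add_mul_log hψ.continuousAt (hr.trans (lt_add_one r))
      (fun r hr => hout r hr.1) r ⟨hr, lt_add_one r⟩
  · obtain ⟨C₀, B₀, hin⟩ := haffine (s := Ioo 0 ρ) ordConnected_Ioo (fun r hr => hr.1) (by simp)
    have hin₀ : EqOn ψ (fun _ => ψ 0) (Icc 0 ρ) :=
      EqOn.of_subset_closure (s := Ioo 0 ρ)
        (eq_of_continuousAt_zero_of_eq_add_mul_log hψ.continuousAt hρ hin) hψ.continuousOn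
        continuousOn_const Ioo_subset_Icc_self (closure_Ioo hρ.ne).ge
    have hout' : EqOn ψ (fun r => C + B * log r) (Ici ρ) :=
      EqOn.of_subset_closure (s := Ioi ρ) hout hψ.continuousOn
        (continuousOn_const.add (continuousOn_const.mul
          (continuousOn_log.mono fun r hr => (hρ.trans_le hr).ne')))
        Ioi_subset_Ici_self (closure_Ioi ρ).ge
    refine ⟨B, fun r hr => ?_⟩
    rw [posLog_mul_inv hr.le hρ]
    split_ifs with hρr
    · have hψρ : ψ 0 = C + B * log ρ :=
        (hin₀ ⟨hρ.le, le_rfl⟩).symm.trans (hout' (mem_Ici.2 le_rfl))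
      have hψr : ψ r = C + B * log r := hout' hρr
      rw [hψr, hψρ, log_div hr.ne' hρ.ne']
      ring
    · rw [mul_zero, add_zero]
      exact hin₀ ⟨hr.le, (not_le.1 hρr).le⟩

end LogAffine

section LogPotential

variable {f : ℂ → ℝ} {x z : ℂ} {r s a b : ℝ}

theorem norm_le_norm_add_of_mem_ball (hz : z ∈ ball x r) : ‖z‖ ≤ ‖x‖ + r := by
  have h₁ := norm_sub_norm_le z x
  have h₂ := mem_ball_iff_norm.1 hz
  linarith

theorem integrable_norm_rpow_mul_posLog {β : ℝ} (hβ : -2 < β) :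
    Integrable fun z : ℂ => ‖z‖ ^ β * log⁺ ‖z‖⁻¹ := by
  set δ := (β + 2) / 2 with hδ
  have hδ₀ : 0 < δ := by linarith
  have hmeas : AEStronglyMeasurable (fun z : ℂ => ‖z‖ ^ β * log⁺ ‖z‖⁻¹) volume :=
    (by fun_prop : Measurable fun z : ℂ => ‖z‖ ^ β * log⁺ ‖z‖⁻¹).aestronglyMeasurable
  have hball : IntegrableOn (fun z : ℂ => ‖z‖ ^ β * log⁺ ‖z‖⁻¹) (ball 0 1) := by
    refine integrableOn_ball_of_norm_le_rpow (C := δ⁻¹) (α := δ - β) (by simp) ?_ ?_ hmeas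
    · rw [Complex.finrank_real_complex]
      push_cast
      linarith
    · filter_upwards [ae_restrict_of_ae (Measure.ae_ne volume (0 : ℂ))] with z hz
      have hz : 0 < ‖z‖ := norm_pos_iff.2 hz
      have hlog : log⁺ ‖z‖⁻¹ ≤ δ⁻¹ * ‖z‖ ^ (-δ) := by
        refine max_le (by positivity) ((log_le_rpow_div (by positivity) hδ₀).trans_eq ?_)
        rw [inv_rpow hz.le, rpow_neg hz.le, div_eq_inv_mul]
      rw [norm_of_nonneg (mul_nonneg (by positivity) posLog_nonneg)]
      calc ‖z‖ ^ β * log⁺ ‖z‖⁻¹ ≤ ‖z‖ ^ β * (δ⁻¹ * ‖z‖ ^ (-δ)) := by gcongr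
        _ = δ⁻¹ * ‖z‖ ^ (-(δ - β)) := by
          rw [neg_sub, sub_eq_add_neg, rpow_add hz]
          ring
  refine (integrableOn_iff_integrable_of_support_subset fun z hz => ?_).1 hball
  by_contra h
  have hz₁ : 1 ≤ ‖z‖ := by simpa using h
  refine hz ?_
  have : log⁺ ‖z‖⁻¹ = 0 := by
    rw [posLog_eq_zero_iff, abs_of_nonneg (by positivity)]
    exact inv_le_one_of_one_le₀ hz₁
  simp [this]

theorem integrable_posLog_inv_norm : Integrable fun z : ℂ => log⁺ ‖z‖⁻¹ := by
  simpa using integrable_norm_rpow_mul_posLog (β := 0) (by norm_num)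

/-- The logarithmic kernel on the plane, normalized by `log (1 + ‖y‖)` so that its product with an
integrable density stays integrable at infinity. -/
noncomputable def logKernel (z y : ℂ) : ℝ := log ‖z - y‖ - log (1 + ‖y‖)

theorem measurable_logKernel : Measurable fun p : ℂ × ℂ => logKernel p.1 p.2 := by
  unfold logKernel
  fun_prop

theorem log_norm_le_log_one_add_norm (y : ℂ) : log ‖y‖ ≤ log (1 + ‖y‖) := by
  rcases (norm_nonneg y).eq_or_lt with h | h
  · simp [← h]
  · exact log_le_log h (by linarith)

theorem logKernel_le (z y : ℂ) : logKernel z y ≤ log (1 + ‖z‖) := by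
  have hz := norm_nonneg z
  have hy := norm_nonneg y
  rw [logKernel, sub_le_iff_le_add, ← log_mul (by positivity) (by positivity)]
  refine (log_norm_le_log_one_add_norm _).trans (log_le_log (by positivity) ?_)
  nlinarith [norm_sub_le z y, mul_nonneg hz hy]

theorem neg_logKernel_le (z y : ℂ) : -logKernel z y ≤ log (2 + ‖z‖) + log⁺ ‖z - y‖⁻¹ := by
  have hy : ‖y‖ ≤ ‖z‖ + ‖z - y‖ := by simpa using norm_sub_le z (z - y)
  have hmono : 1 + ‖y‖ ≤ (2 + ‖z‖) * max 1 ‖z - y‖ := by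
    nlinarith [norm_nonneg z, le_max_left 1 ‖z - y‖, le_max_right 1 ‖z - y‖]
  have hmax : log (max 1 ‖z - y‖) = log ‖z - y‖ + log⁺ ‖z - y‖⁻¹ := by
    rw [← posLog_eq_log_max_one (norm_nonneg _)]
    linarith [posLog_sub_posLog_inv (x := ‖z - y‖)]
  have hlog := log_le_log (by positivity) hmono
  rw [log_mul (by positivity) (by positivity), hmax] at hlog
  rw [logKernel]
  linarith

theorem abs_logKernel_le (z y : ℂ) : |logKernel z y| ≤ log (2 + ‖z‖) + log⁺ ‖z - y‖⁻¹ := by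
  refine abs_le'.2 ⟨?_, neg_logKernel_le z y⟩
  have hz : log (1 + ‖z‖) ≤ log (2 + ‖z‖) := log_le_log (by positivity) (by linarith)
  linarith [logKernel_le z y, posLog_nonneg (x := ‖z - y‖⁻¹)]

/-- Densities that are integrable, and remain so against every logarithmic singularity: exactly
what makes their logarithmic potential an absolutely convergent integral at each point. -/
structure LogIntegrable (f : ℂ → ℝ) : Prop where
  integrable : Integrable f
  integrable_posLog_mul (x : ℂ) : Integrable fun y => log⁺ ‖x - y‖⁻¹ * f y

theorem LogIntegrable.integrable_logKernel_mul (hf : LogIntegrable f) (z : ℂ) :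
    Integrable fun y => logKernel z y * f y := by
  refine ((hf.integrable.norm.const_mul (log (2 + ‖z‖))).add
    (hf.integrable_posLog_mul z).norm).mono' ?_ (.of_forall fun y => ?_)
  · exact (measurable_logKernel.comp measurable_prodMk_left).aestronglyMeasurable.mul
      hf.integrable.1
  · simp only [norm_mul, Pi.add_apply, norm_of_nonneg posLog_nonneg, ← add_mul]
    exact mul_le_mul_of_nonneg_right (abs_logKernel_le z y) (norm_nonneg _)

/-- The logarithmic potential of the density `f`, with the normalized kernel; its Laplacian
is `f`. -/
noncomputable def logPotential (f : ℂ → ℝ) (z : ℂ) : ℝ := (2 * π)⁻¹ * ∫ y, logKernel z y * f y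

/-- The total mass of the density `f`, normalized so that `logPotential f` grows like
`logMass f * log ‖z‖` at infinity. -/
noncomputable def logMass (f : ℂ → ℝ) : ℝ := (2 * π)⁻¹ * ∫ y, f y

theorem logMass_nonneg (hf₀ : ∀ y, 0 ≤ f y) : 0 ≤ logMass f :=
  mul_nonneg (by positivity) (integral_nonneg hf₀)

theorem LogIntegrable.logPotential_le (hf : LogIntegrable f) (hf₀ : ∀ y, 0 ≤ f y) (z : ℂ) :
    logPotential f z ≤ logMass f * log (1 + ‖z‖) := by
  rw [logPotential, logMass, mul_assoc, ← integral_mul_const]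
  refine mul_le_mul_of_nonneg_left (integral_mono (hf.integrable_logKernel_mul z)
    (hf.integrable.mul_const _) fun y => ?_) (by positivity)
  rw [mul_comm (f y)]
  exact mul_le_mul_of_nonneg_right (logKernel_le z y) (hf₀ y)

theorem integrableOn_logPotential (hf : Integrable f) (x : ℂ) (R : ℝ) :
    IntegrableOn (logPotential f) (ball x R) := by
  refine Integrable.const_mul (Integrable.integral_prod_left
    (f := fun p : ℂ × ℂ => logKernel p.1 p.2 * f p.2) ?_) _
  have hconst : Integrable (fun p : ℂ × ℂ => log (2 + (‖x‖ + R)) * ‖f p.2‖)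
      ((volume.restrict (ball x R)).prod volume) :=
    Integrable.mul_prod (f := fun _ => log (2 + (‖x‖ + R)))
      (integrableOn_const measure_ball_lt_top.ne) hf.norm
  have hpole : Integrable (fun p : ℂ × ℂ => ‖f p.2‖ * log⁺ ‖p.1 - p.2‖⁻¹)
      ((volume.restrict (ball x R)).prod volume) := by
    have h := (hf.norm.convolution_integrand (ContinuousLinearMap.mul ℝ ℝ)
      integrable_posLog_inv_norm).integrableOn (s := ball x R ×ˢ univ)
    rwa [IntegrableOn, ← Measure.prod_restrict, Measure.restrict_univ] at h
  refine (hconst.add hpole).mono' (measurable_logKernel.aestronglyMeasurable.mul hf.1.comp_snd) ?_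
  filter_upwards [Measure.quasiMeasurePreserving_fst.ae
    (ae_restrict_mem (μ := volume) (measurableSet_ball (x := x) (ε := R)))] with p hp
  have hlog : log (2 + ‖p.1‖) ≤ log (2 + (‖x‖ + R)) :=
    log_le_log (by positivity) (by linarith [norm_le_norm_add_of_mem_ball hp])
  rw [norm_mul, Pi.add_apply, mul_comm ‖f p.2‖ (log⁺ _), ← add_mul]
  exact mul_le_mul_of_nonneg_right ((abs_logKernel_le _ _).trans (by gcongr)) (norm_nonneg _)

/-- The logarithmic counting function of the density `f` about `x`, as in Jensen's formula. -/
noncomputable def logCounting (f : ℂ → ℝ) (x : ℂ) (r : ℝ) : ℝ := ∫ y, log⁺ (r * ‖x - y‖⁻¹) * f y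

theorem norm_posLog_mul_mul_le (hr : |r| ≤ s) (w : ℝ) (v : ℝ) :
    ‖log⁺ (r * w) * v‖ ≤ log⁺ s * ‖v‖ + ‖log⁺ w * v‖ := by
  have hrs : log⁺ r ≤ log⁺ s := posLog_abs r ▸ posLog_le_posLog (abs_nonneg r) hr
  simp only [norm_mul, norm_of_nonneg posLog_nonneg, ← add_mul]
  exact mul_le_mul_of_nonneg_right (posLog_mul.trans (by gcongr)) (norm_nonneg _)

theorem LogIntegrable.integrable_posLog_mul_inv_mul (hf : LogIntegrable f) (x : ℂ) (r : ℝ) :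
    Integrable fun y => log⁺ (r * ‖x - y‖⁻¹) * f y :=
  ((hf.integrable.norm.const_mul (log⁺ |r|)).add (hf.integrable_posLog_mul x).norm).mono'
    ((by fun_prop : Measurable fun y : ℂ => log⁺ (r * ‖x - y‖⁻¹)).aestronglyMeasurable.mul
      hf.integrable.1)
    (.of_forall fun _ => norm_posLog_mul_mul_le le_rfl _ _)

theorem LogIntegrable.continuous_logCounting (hf : LogIntegrable f) (x : ℂ) :
    Continuous (logCounting f x) := by
  refine continuous_iff_continuousAt.2 fun r₀ => ?_
  refine continuousAt_of_dominated
    (.of_forall fun r => (hf.integrable_posLog_mul_inv_mul x r).1)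
    ?_ ((hf.integrable.norm.const_mul (log⁺ (|r₀| + 1))).add (hf.integrable_posLog_mul x).norm)
    (.of_forall fun y => ((continuous_posLog.comp (by fun_prop)).mul
      continuous_const).continuousAt)
  filter_upwards [ball_mem_nhds r₀ one_pos] with r hr
  refine .of_forall fun y => norm_posLog_mul_mul_le ?_ _ _
  have h₁ := abs_sub_abs_le_abs_sub r r₀
  have h₂ := mem_ball_iff_norm.1 hr
  rw [norm_eq_abs] at h₂
  linarith

theorem logCounting_zero (f : ℂ → ℝ) (x : ℂ) : logCounting f x 0 = 0 := by
  simp [logCounting]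

theorem posLog_mul_inv_sub_posLog_mul_inv (ha : 0 < a) (hab : a ≤ b) {d : ℝ} (hd : 0 < d) :
    log⁺ (b * d⁻¹) - log⁺ (a * d⁻¹) =
      (if d ≤ a then log (b / a) else 0) + if d ∈ Ioc a b then log (b / d) else 0 := by
  have hb : 0 < b := ha.trans_le hab
  rw [posLog_mul_inv hb.le hd, posLog_mul_inv ha.le hd]
  by_cases hda : d ≤ a
  · simp only [hda, hda.trans hab, not_lt.2 hda, mem_Ioc, false_and, if_true, if_false,
      log_div hb.ne' hd.ne', log_div ha.ne' hd.ne', log_div hb.ne' ha.ne']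
    ring
  · simp [hda, not_le.1 hda]

theorem integrableOn_log_div_mul (hf : Integrable f) (x : ℂ) (ha : 0 < a) (b : ℝ) :
    IntegrableOn (fun y => log (b / ‖y - x‖) * f y) {y | ‖y - x‖ ∈ Ioc a b} := by
  have hS : MeasurableSet {y : ℂ | ‖y - x‖ ∈ Ioc a b} :=
    (by fun_prop : Measurable fun y : ℂ => ‖y - x‖) measurableSet_Ioc
  refine (hf.norm.const_mul (log (b / a))).integrableOn.mono' ?_ ?_
  · exact (by fun_prop : Measurable fun y : ℂ => log (b / ‖y - x‖)).aestronglyMeasurable.mul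
      hf.1.restrict
  · filter_upwards [ae_restrict_mem hS] with y hy
    have hy₀ : 0 < ‖y - x‖ := ha.trans hy.1
    have hb : 0 < b := hy₀.trans_le hy.2
    rw [norm_mul, norm_of_nonneg (log_nonneg ((one_le_div hy₀).2 hy.2))]
    gcongr
    exact hy.1.le

theorem setIntegral_log_div_mul (hf : Integrable f) (x : ℂ) (ha : 0 < a) (hab : a ≤ b) :
    ∫ y in {y | ‖y - x‖ ∈ Ioc a b}, log (b / ‖y - x‖) * f y =
      2 * π * ∫ s in a..b, log (b / s) * (s * circleAverage f x s) := by
  rw [(integrableOn_and_setIntegral_norm_sub_mem measurableSet_Ioc (fun s hs => ha.trans hs.1)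
    (integrableOn_log_div_mul hf x ha b)).2, intervalIntegral.integral_of_le hab, smul_eq_mul]
  congr 1
  refine setIntegral_congr_fun measurableSet_Ioc fun s hs => ?_
  have hcircle : circleAverage (fun y => log (b / ‖y - x‖) * f y) x s =
      log (b / s) * circleAverage f x s := by
    rw [← smul_eq_mul, ← circleAverage_fun_smul]
    refine circleAverage_congr_sphere fun y hy => ?_
    simp only [mem_sphere_iff_norm, abs_of_pos (ha.trans hs.1)] at hy
    simp only [hy, smul_eq_mul]
  simp only [hcircle, smul_eq_mul]
  ring

theorem LogIntegrable.logCounting_sub_logCounting (hf : LogIntegrable f) (x : ℂ) (ha : 0 < a)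
    (hab : a ≤ b) :
    logCounting f x b - logCounting f x a = log (b / a) * (∫ y in {y | ‖y - x‖ ≤ a}, f y) +
      2 * π * ∫ s in a..b, log (b / s) * (s * circleAverage f x s) := by
  have hT : MeasurableSet {y : ℂ | ‖y - x‖ ≤ a} := measurableSet_le (by fun_prop) (by fun_prop)
  have hS : MeasurableSet {y : ℂ | ‖y - x‖ ∈ Ioc a b} :=
    (by fun_prop : Measurable fun y : ℂ => ‖y - x‖) measurableSet_Ioc
  have hannulus := integrableOn_log_div_mul hf.integrable x ha b
  rw [← setIntegral_log_div_mul hf.integrable x ha hab, logCounting, logCounting,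
    ← integral_sub (hf.integrable_posLog_mul_inv_mul x b) (hf.integrable_posLog_mul_inv_mul x a),
    ← integral_const_mul, ← integral_indicator hT, ← integral_indicator hS,
    ← integral_add ((hf.integrable.const_mul _).integrableOn.integrable_indicator hT)
      (hannulus.integrable_indicator hS)]
  refine integral_congr_ae ?_
  filter_upwards [Measure.ae_ne volume x] with y hy
  have hd : 0 < ‖x - y‖ := norm_pos_iff.2 (sub_ne_zero.2 hy.symm)
  rw [← sub_mul, posLog_mul_inv_sub_posLog_mul_inv ha hab hd]
  simp only [indicator, mem_ofPred_eq, norm_sub_rev y x]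
  split_ifs <;> ring

end LogPotential

section MeanValue

open InnerProductSpace Laplacian

variable {f U : ℂ → ℝ} {x y : ℂ} {a s : ℝ}

theorem circleIntegrable_logKernel (y x : ℂ) (s : ℝ) :
    CircleIntegrable (logKernel · y) x s :=
  (MeromorphicOn.circleIntegrable_log_norm (f := fun z => z - y) fun _ _ => by fun_prop).sub
    (circleIntegrable_const _ _ _)

theorem circleAverage_logKernel (hxy : x ≠ y) (hs : 0 < s) :
    circleAverage (logKernel · y) x s = logKernel x y + log⁺ (s * ‖x - y‖⁻¹) := by
  have hd : 0 < ‖x - y‖ := norm_pos_iff.2 (sub_ne_zero.2 hxy)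
  have hposLog := posLog_sub_posLog_inv (x := s⁻¹ * ‖x - y‖)
  rw [log_mul (by positivity) (by positivity), log_inv, mul_inv, inv_inv] at hposLog
  have hlog := circleAverage_log_norm_sub_const_eq_log_radius_add_posLog (a := y) (c := x) hs.ne'
  simp only [logKernel]
  rw [circleAverage_fun_sub (MeromorphicOn.circleIntegrable_log_norm (f := fun z => z - y)
    fun _ _ => by fun_prop) (circleIntegrable_const _ _ _), hlog, circleAverage_const]
  linarith

/-- The kernel is bounded above on the circle, so its mean controls the mean of its modulus. -/
theorem circleAverage_abs_logKernel_le (hxy : x ≠ y) (hs : 0 < s) :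
    circleAverage (fun z => |logKernel z y|) x s ≤
      2 * log (1 + (‖x‖ + s)) + |logKernel x y| := by
  have hK := circleIntegrable_logKernel y x s
  have hle : ∀ z ∈ sphere x |s|, |logKernel z y| ≤ 2 * log (1 + (‖x‖ + s)) - logKernel z y := by
    intro z hz
    have hzx : ‖z‖ ≤ ‖x‖ + s := by
      have h := norm_sub_norm_le z x
      rw [mem_sphere_iff_norm.1 hz, abs_of_pos hs] at h
      linarith
    have hlog : log (1 + ‖z‖) ≤ log (1 + (‖x‖ + s)) := log_le_log (by positivity) (by linarith)
    have hlog₀ : 0 ≤ log (1 + (‖x‖ + s)) := log_nonneg (by linarith [norm_nonneg x])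
    exact abs_le'.2 ⟨by linarith [logKernel_le z y], by linarith⟩
  calc circleAverage (fun z => |logKernel z y|) x s
      ≤ circleAverage (fun z => 2 * log (1 + (‖x‖ + s)) - logKernel z y) x s :=
        circleAverage_mono hK.abs ((circleIntegrable_const _ _ _).sub hK) hle
    _ = 2 * log (1 + (‖x‖ + s)) - (logKernel x y + log⁺ (s * ‖x - y‖⁻¹)) := by
        rw [circleAverage_fun_sub (circleIntegrable_const _ _ _) hK, circleAverage_const,
          circleAverage_logKernel hxy hs]
    _ ≤ 2 * log (1 + (‖x‖ + s)) + |logKernel x y| := by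
        linarith [neg_abs_le (logKernel x y), posLog_nonneg (x := s * ‖x - y‖⁻¹)]

theorem LogIntegrable.integrable_logKernel_circleMap_mul (hf : LogIntegrable f) (x : ℂ)
    (hs : 0 < s) :
    Integrable (fun p : ℝ × ℂ => logKernel (circleMap x s p.1) p.2 * f p.2)
      ((volume.restrict (Ioc 0 (2 * π))).prod volume) := by
  have hmeas : AEStronglyMeasurable (fun p : ℝ × ℂ => logKernel (circleMap x s p.1) p.2 * f p.2)
      ((volume.restrict (Ioc 0 (2 * π))).prod volume) :=
    (measurable_logKernel.comp (f := fun p : ℝ × ℂ => (circleMap x s p.1, p.2))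
      (by fun_prop)).aestronglyMeasurable.mul hf.integrable.1.comp_snd
  refine (integrable_prod_iff' hmeas).2 ⟨.of_forall fun y => ?_, ?_⟩
  · exact ((intervalIntegrable_iff_integrableOn_Ioc_of_le two_pi_pos.le).1
      (circleIntegrable_logKernel y x s)).mul_const (f y)
  · refine (((hf.integrable.norm.const_mul (2 * log (1 + (‖x‖ + s)))).add
      (hf.integrable_logKernel_mul x).norm).const_mul (2 * π)).mono'
      hmeas.norm.prod_swap.integral_prod_right' ?_
    filter_upwards [Measure.ae_ne volume x] with y hy
    have hle := circleAverage_abs_logKernel_le hy.symm hs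
    rw [circleAverage_def, intervalIntegral.integral_of_le two_pi_pos.le, smul_eq_mul,
      inv_mul_le_iff₀ two_pi_pos] at hle
    simp only [norm_mul, integral_mul_const, norm_eq_abs, Pi.add_apply, abs_abs]
    rw [abs_of_nonneg (integral_nonneg fun _ => abs_nonneg _), ← add_mul, ← mul_assoc]
    exact mul_le_mul_of_nonneg_right hle (abs_nonneg _)

theorem LogIntegrable.circleIntegrable_logPotential (hf : LogIntegrable f) (x : ℂ) (hs : 0 < s) :
    CircleIntegrable (logPotential f) x s :=
  (intervalIntegrable_iff_integrableOn_Ioc_of_le two_pi_pos.le).2 <|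
    (hf.integrable_logKernel_circleMap_mul x hs).integral_prod_left.const_mul _

theorem LogIntegrable.circleAverage_logPotential (hf : LogIntegrable f) (x : ℂ) (hs : 0 < s) :
    circleAverage (logPotential f) x s = logPotential f x + (2 * π)⁻¹ * logCounting f x s := by
  have hswap : ∫ t in Ioc 0 (2 * π), ∫ y, logKernel (circleMap x s t) y * f y =
      ∫ y, 2 * π * (logKernel x y * f y + log⁺ (s * ‖x - y‖⁻¹) * f y) := by
    rw [integral_integral_swap (hf.integrable_logKernel_circleMap_mul x hs)]
    refine integral_congr_ae ?_
    filter_upwards [Measure.ae_ne volume x] with y hy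
    have h := circleAverage_logKernel hy.symm hs
    rw [circleAverage_def, intervalIntegral.integral_of_le two_pi_pos.le, smul_eq_mul,
      inv_mul_eq_iff_eq_mul₀ two_pi_pos.ne'] at h
    rw [integral_mul_const, h]
    ring
  rw [circleAverage_def, intervalIntegral.integral_of_le two_pi_pos.le, smul_eq_mul]
  simp only [logPotential, logCounting]
  rw [integral_const_mul, hswap, integral_const_mul, integral_add (hf.integrable_logKernel_mul x)
    (hf.integrable_posLog_mul_inv_mul x s)]
  field_simp

/-- `U` solves `-ΔU = f` classically away from the origin, and extends continuously across it. -/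
structure IsPuncturedPoissonSolution (f U : ℂ → ℝ) : Prop where
  continuous : Continuous U
  contDiffAt : ∀ z ≠ 0, ContDiffAt ℝ 2 U z
  laplacian_eq : ∀ z ≠ 0, Δ U z = -f z

theorem IsPuncturedPoissonSolution.exists_circleAverage_add_logCounting_sub_eq
    (hU : IsPuncturedPoissonSolution f U) (hf : LogIntegrable f) (ha : 0 < a) :
    ∃ B, ∀ b, a ≤ b → ‖x‖ ∉ Icc a b →
      circleAverage U x b + (2 * π)⁻¹ * logCounting f x b -
        (circleAverage U x a + (2 * π)⁻¹ * logCounting f x a) = B * log (b / a) := by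
  refine ⟨meanFlux U x a + (2 * π)⁻¹ * ∫ y in {y | ‖y - x‖ ≤ a}, f y, fun b hab hx => ?_⟩
  have hne (z : ℂ) (hz : ‖z - x‖ ∈ Icc a b) : z ≠ 0 := by
    rintro rfl
    exact hx (by simpa using hz)
  have hΔ : ∫ s in a..b, log (b / s) * (s * circleAverage (Δ U) x s) =
      -∫ s in a..b, log (b / s) * (s * circleAverage f x s) := by
    rw [← intervalIntegral.integral_neg]
    refine intervalIntegral.integral_congr fun s hs => ?_
    rw [uIcc_of_le hab] at hs
    have hsphere : circleAverage (Δ U) x s = circleAverage ((-1 : ℝ) • f) x s := by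
      refine circleAverage_congr_sphere fun z hz => ?_
      rw [mem_sphere_iff_norm, abs_of_pos (ha.trans_le hs.1)] at hz
      simp [hU.laplacian_eq z (hne z (hz ▸ hs))]
    simp only [hsphere, circleAverage_smul, smul_eq_mul]
    ring
  have hgreen := circleAverage_sub_circleAverage ha hab fun z hz => hU.contDiffAt z (hne z hz)
  have hcount := hf.logCounting_sub_logCounting x ha hab
  rw [hΔ] at hgreen
  have hcancel := congrArg ((2 * π)⁻¹ * ·) hcount
  simp only [mul_add, inv_mul_cancel_left₀ two_pi_pos.ne'] at hcancel
  linear_combination hgreen + hcancel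

theorem IsPuncturedPoissonSolution.exists_circleAverage_add_logCounting_eq
    (hU : IsPuncturedPoissonSolution f U) (hf : LogIntegrable f) (x : ℂ) :
    ∃ c, ∀ r, 0 < r → circleAverage U x r + (2 * π)⁻¹ * logCounting f x r =
      U x + c * log⁺ (r * ‖x‖⁻¹) := by
  have hcont : Continuous fun r => circleAverage U x r + (2 * π)⁻¹ * logCounting f x r :=
    hU.continuous.circleAverage.add ((hf.continuous_logCounting x).const_mul _)
  obtain ⟨c, hc⟩ := exists_eq_add_mul_posLog hcont (norm_nonneg x) fun a ha =>
    hU.exists_circleAverage_add_logCounting_sub_eq hf ha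
  exact ⟨c, by simpa [logCounting_zero] using hc⟩

/-- The constant `c` accounts for a possible point mass of `ΔU` at the origin. -/
theorem IsPuncturedPoissonSolution.exists_setIntegral_ball_add_logPotential
    (hU : IsPuncturedPoissonSolution f U) (hf : LogIntegrable f) (x : ℂ) :
    ∃ c, ∀ R, 0 < R → ∫ z in ball x R, (U z + logPotential f z) =
      π * R ^ 2 * (U x + logPotential f x) + c * ∫ s in 0..R, s * log⁺ (s * ‖x‖⁻¹) := by
  obtain ⟨c, hc⟩ := hU.exists_circleAverage_add_logCounting_eq hf x
  refine ⟨2 * π * c, fun R hR => ?_⟩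
  have hint : IntegrableOn (fun z => U z + logPotential f z) (ball x R) :=
    ((hU.continuous.continuousOn.integrableOn_compact (isCompact_closedBall x R)).mono_set
      ball_subset_closedBall).add (integrableOn_logPotential hf.integrable x R)
  have hmean : ∀ s ∈ Ioc 0 R, s • circleAverage (fun z => U z + logPotential f z) x s =
      (U x + logPotential f x) * s + c * (s * log⁺ (s * ‖x‖⁻¹)) := by
    intro s hs
    rw [circleAverage_fun_add hU.continuous.continuousOn.circleIntegrable'
      (hf.circleIntegrable_logPotential x hs.1), hf.circleAverage_logPotential x hs.1, smul_eq_mul]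
    linear_combination s * hc s hs.1
  rw [(integrableOn_and_setIntegral_ball hint).2, ← integral_Ioc_eq_integral_Ioo,
    setIntegral_congr_fun measurableSet_Ioc hmean, ← intervalIntegral.integral_of_le hR.le,
    intervalIntegral.integral_add (Continuous.intervalIntegrable (by fun_prop) _ _)
      (Continuous.intervalIntegrable (by fun_prop) _ _),
    intervalIntegral.integral_const_mul, intervalIntegral.integral_const_mul, integral_id,
    smul_eq_mul]
  ring

end MeanValue

section Liouville

variable {H F f U : ℂ → ℝ} {φ : ℝ → ℝ} {a b : ℂ} {C d r ρ R : ℝ}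

theorem nonneg_of_tendsto_of_eventually_le_const_mul {ι : Type*} {l : Filter ι} [l.NeBot]
    {A g : ι → ℝ} {L c : ℝ} (hA : Tendsto A l (𝓝 L)) (hg : Tendsto g l atTop)
    (h : ∀ᶠ i in l, A i ≤ c * g i) : 0 ≤ c := by
  by_contra! hc
  exact not_tendsto_nhds_of_tendsto_atBot
    (tendsto_atBot_mono' l h (hg.const_mul_atTop_of_neg hc)) L hA

theorem integral_mul_posLog_nonneg (ρ : ℝ) (hR : 0 ≤ R) :
    0 ≤ ∫ s in 0..R, s * log⁺ (s * ρ⁻¹) :=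
  intervalIntegral.integral_nonneg hR fun _ hs => mul_nonneg hs.1 posLog_nonneg

theorem log_div_four_le_integral_mul_posLog_div_sq (hρ : 0 < ρ) (hR : 0 < R) :
    log (R / 2 * ρ⁻¹) / 4 ≤ (∫ s in 0..R, s * log⁺ (s * ρ⁻¹)) / R ^ 2 := by
  have hint (a b : ℝ) : IntervalIntegrable (fun s => s * log⁺ (s * ρ⁻¹)) volume a b :=
    Continuous.intervalIntegrable (by fun_prop) a b
  rw [le_div_iff₀ (by positivity)]
  calc log (R / 2 * ρ⁻¹) / 4 * R ^ 2
      ≤ log⁺ (R / 2 * ρ⁻¹) / 4 * R ^ 2 := by gcongr; exact le_max_right _ _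
    _ = ∫ _ in R / 2..R, R / 2 * log⁺ (R / 2 * ρ⁻¹) := by
        rw [intervalIntegral.integral_const, smul_eq_mul]
        ring
    _ ≤ ∫ s in R / 2..R, s * log⁺ (s * ρ⁻¹) := by
        refine intervalIntegral.integral_mono_on (by linarith) (by simp) (hint _ _) fun s hs => ?_
        have hs₀ : 0 ≤ s := (half_pos hR).le.trans hs.1
        exact mul_le_mul hs.1 (posLog_le_posLog (by positivity) (by gcongr; exact hs.1))
          posLog_nonneg hs₀
    _ ≤ ∫ s in 0..R, s * log⁺ (s * ρ⁻¹) := by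
        rw [← intervalIntegral.integral_add_adjacent_intervals (hint 0 (R / 2)) (hint _ _)]
        exact le_add_of_nonneg_left (integral_mul_posLog_nonneg ρ (half_pos hR).le)

theorem tendsto_integral_mul_posLog_div_sq (hρ : 0 < ρ) :
    Tendsto (fun R => (∫ s in 0..R, s * log⁺ (s * ρ⁻¹)) / R ^ 2) atTop atTop := by
  have hscale : Tendsto (fun R : ℝ => R / 2 * ρ⁻¹) atTop atTop :=
    (tendsto_id.atTop_div_const two_pos).atTop_mul_const (inv_pos.2 hρ)
  refine tendsto_atTop_mono' _ ?_ ((tendsto_log_atTop.comp hscale).atTop_div_const four_pos)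
  filter_upwards [eventually_gt_atTop 0] with R hR
  exact log_div_four_le_integral_mul_posLog_div_sq hρ hR

theorem tendsto_integral_mul_posLog_add_div_sq (hρ : 0 < ρ) (hd : 0 ≤ d) :
    Tendsto (fun R => (∫ s in 0..R + d, s * log⁺ (s * ρ⁻¹)) / R ^ 2) atTop atTop := by
  refine tendsto_atTop_mono' _ ?_ ((tendsto_integral_mul_posLog_div_sq hρ).comp
    (tendsto_atTop_add_const_right _ d tendsto_id))
  filter_upwards [eventually_gt_atTop 0] with R hR
  exact div_le_div_of_nonneg_left (integral_mul_posLog_nonneg ρ (by positivity)) (by positivity)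
    (by simp only [id]; gcongr; linarith)

theorem tendsto_add_div_self_sq (d : ℝ) :
    Tendsto (fun R : ℝ => (R + d) ^ 2 / R ^ 2) atTop (𝓝 1) := by
  have h := ((tendsto_inv_atTop_zero (𝕜 := ℝ)).const_mul d).const_add 1 |>.pow 2
  rw [mul_zero, add_zero, one_pow] at h
  refine h.congr' ?_
  filter_upwards [eventually_gt_atTop 0] with R hR
  field_simp

theorem tendsto_add_mul_sub_sq_div_sq (hφ : φ =o[atTop] (id : ℝ → ℝ)) (K k d : ℝ) :
    Tendsto (fun R => (K + φ (R + k) * (π * ((R + d) ^ 2 - R ^ 2))) / R ^ 2) atTop (𝓝 0) := by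
  have hinv := tendsto_inv_atTop_zero (𝕜 := ℝ)
  have hshift : Tendsto (fun R : ℝ => R + k) atTop atTop :=
    tendsto_atTop_add_const_right _ _ tendsto_id
  have hratio : Tendsto (fun R => φ (R + k) / (R + k) * (1 + k * R⁻¹)) atTop (𝓝 0) := by
    simpa using (hφ.tendsto_div_nhds_zero.comp hshift).mul ((hinv.const_mul k).const_add 1)
  have h := ((hinv.pow 2).const_mul K).add
    ((hratio.const_mul π).mul ((hinv.const_mul (d ^ 2)).const_add (2 * d)))
  simp only [mul_zero, zero_mul, add_zero, ne_eq, two_ne_zero, not_false_eq_true, zero_pow] at h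
  refine h.congr' ?_
  filter_upwards [eventually_gt_atTop 0, hshift.eventually_gt_atTop 0] with R hR hRk
  field_simp
  ring

theorem volume_real_ball_diff_ball (hr : 0 ≤ r) (hR : 0 ≤ R) (h : ball a r ⊆ ball b R) :
    (volume : Measure ℂ).real (ball b R \ ball a r) = π * (R ^ 2 - r ^ 2) := by
  rw [measureReal_sdiff h measurableSet_ball measure_ball_lt_top.ne]
  simp only [measureReal_def, Complex.volume_ball, ENNReal.toReal_mul, ENNReal.toReal_pow,
    ENNReal.toReal_ofReal hr, ENNReal.toReal_ofReal hR, ENNReal.coe_toReal, NNReal.coe_real_pi]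
  ring

theorem setIntegral_ball_le_add (hloc : ∀ x R, IntegrableOn H (ball x R)) (hF : Integrable F)
    (hF₀ : ∀ z, 0 ≤ F z) (hφ : MonotoneOn φ (Ici 0))
    (hH : ∀ z, 1 ≤ ‖z‖ → H z ≤ F z + φ ‖z‖) (hr : ‖a‖ + 1 ≤ r) (hR : r + dist a b ≤ R) :
    ∫ z in ball b R, H z ≤
      (∫ z in ball a r, H z) + ((∫ z, F z) + φ (‖b‖ + R) * (π * (R ^ 2 - r ^ 2))) := by
  have hr₀ : 0 ≤ r := by linarith [norm_nonneg a]
  have hR₀ : 0 ≤ R := by linarith [dist_nonneg (x := a) (y := b)]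
  have hsub : ball a r ⊆ ball b R := ball_subset_ball' hR
  have hconst : IntegrableOn (fun _ : ℂ => φ (‖b‖ + R)) (ball b R \ ball a r) :=
    integrableOn_const ((measure_mono sdiff_subset).trans_lt measure_ball_lt_top).ne
  have hbound : ∀ z ∈ ball b R \ ball a r, H z ≤ F z + φ (‖b‖ + R) := by
    rintro z ⟨hzb, hza⟩
    have hz₁ : 1 ≤ ‖z‖ := by
      rw [mem_ball_iff_norm, not_lt] at hza
      linarith [norm_sub_le z a]
    have hz₂ : ‖z‖ ≤ ‖b‖ + R := norm_le_norm_add_of_mem_ball hzb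
    exact (hH z hz₁).trans (add_le_add_right (hφ (norm_nonneg z) ((norm_nonneg z).trans hz₂) hz₂) _)
  have hdiff := setIntegral_mono_on (g := fun z => F z + φ (‖b‖ + R))
    ((hloc b R).mono_set sdiff_subset) (hF.integrableOn.add hconst)
    (measurableSet_ball.diff measurableSet_ball) hbound
  rw [setIntegral_sdiff measurableSet_ball (hloc b R) hsub, integral_add hF.integrableOn hconst,
    setIntegral_const, volume_real_ball_diff_ball hr₀ hR₀ hsub, smul_eq_mul] at hdiff
  have hFle := setIntegral_le_integral (s := ball b R \ ball a r) hF (.of_forall hF₀)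
  linarith

theorem exists_tendsto_le_of_setIntegral_ball_eq (hloc : ∀ x R, IntegrableOn H (ball x R))
    (hF : Integrable F) (hF₀ : ∀ z, 0 ≤ F z) (hφ : MonotoneOn φ (Ici 0))
    (hφo : φ =o[atTop] (id : ℝ → ℝ)) (hH : ∀ z, 1 ≤ ‖z‖ → H z ≤ F z + φ ‖z‖) {M N : ℝ → ℝ}
    (ha : ∀ R, 0 < R → ∫ z in ball a R, H z = π * R ^ 2 * H a + M R)
    (hb : ∀ R, 0 < R → ∫ z in ball b R, H z = π * R ^ 2 * H b + N R) :
    ∃ A : ℝ → ℝ, Tendsto A atTop (𝓝 (π * (H b - H a))) ∧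
      ∀ᶠ R in atTop, A R ≤ M R / R ^ 2 - N (R + dist a b) / R ^ 2 := by
  set E : ℝ → ℝ := fun R => ((∫ z, F z) + φ (R + (‖b‖ + dist a b)) *
    (π * ((R + dist a b) ^ 2 - R ^ 2))) / R ^ 2 with hE_def
  have hE : Tendsto E atTop (𝓝 0) := tendsto_add_mul_sub_sq_div_sq hφo _ _ _
  refine ⟨fun R => π * H b * ((R + dist a b) ^ 2 / R ^ 2) - E R - π * H a, ?_, ?_⟩
  · simpa [mul_sub] using
      (((tendsto_add_div_self_sq (dist a b)).const_mul (π * H b)).sub hE).sub_const (π * H a)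
  · filter_upwards [eventually_ge_atTop (‖a‖ + 1)] with R hR
    have hR₀ : 0 < R := by linarith [norm_nonneg a]
    have hle := setIntegral_ball_le_add hloc hF hF₀ hφ hH hR (le_refl (R + dist a b))
    rw [ha R hR₀, hb _ (by positivity), add_left_comm ‖b‖,
      ← div_le_div_iff_of_pos_right (pow_pos hR₀ 2)] at hle
    simp only [add_div _ _ (R ^ 2)] at hle
    have hHa : π * R ^ 2 * H a / R ^ 2 = π * H a := by field_simp
    simp only [hE_def, add_div _ _ (R ^ 2)]
    linear_combination hle + hHa

/-- A nonzero coefficient `c` would contribute `±∞` on the scale `R²`, on which balls about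
different centres cannot be distinguished. -/
theorem eq_of_setIntegral_ball_eq (hloc : ∀ x R, IntegrableOn H (ball x R))
    (hF : Integrable F) (hF₀ : ∀ z, 0 ≤ F z) (hφ : MonotoneOn φ (Ici 0))
    (hφo : φ =o[atTop] (id : ℝ → ℝ)) (hH : ∀ z, 1 ≤ ‖z‖ → H z ≤ F z + φ ‖z‖)
    (hmean : ∀ x, ∃ c, ∀ R, 0 < R → ∫ z in ball x R, H z =
      π * R ^ 2 * H x + c * ∫ s in 0..R, s * log⁺ (s * ‖x‖⁻¹)) (x : ℂ) : H x = H 0 := by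
  rcases eq_or_ne x 0 with rfl | hx
  · rfl
  have hρ : 0 < ‖x‖ := norm_pos_iff.2 hx
  obtain ⟨c, hc⟩ := hmean x
  obtain ⟨c₀, hc₀⟩ := hmean 0
  obtain ⟨A, hA, hAle⟩ :=
    exists_tendsto_le_of_setIntegral_ball_eq hloc hF hF₀ hφ hφo hH hc hc₀
  obtain ⟨A', hA', hAle'⟩ :=
    exists_tendsto_le_of_setIntegral_ball_eq hloc hF hF₀ hφ hφo hH hc₀ hc
  simp only [norm_zero, inv_zero, mul_zero, posLog_zero, intervalIntegral.integral_zero, zero_div,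
    sub_zero, zero_sub, dist_zero_left, mul_div_assoc, ← neg_mul] at hAle hAle'
  have hc_nonneg : 0 ≤ c := nonneg_of_tendsto_of_eventually_le_const_mul hA
    (tendsto_integral_mul_posLog_div_sq hρ) hAle
  have hc_nonpos : 0 ≤ -c := nonneg_of_tendsto_of_eventually_le_const_mul hA'
    (tendsto_integral_mul_posLog_add_div_sq hρ hρ.le) hAle'
  obtain rfl : c = 0 := by linarith
  simp only [neg_zero, zero_mul] at hAle hAle'
  have h₁ := (mul_nonpos_iff_pos_imp_nonpos.1 (le_of_tendsto hA hAle)).1 pi_pos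
  have h₂ := (mul_nonpos_iff_pos_imp_nonpos.1 (le_of_tendsto hA' hAle')).1 pi_pos
  linarith

theorem isLittleO_const_mul_log_one_add (K : ℝ) :
    (fun r => K * log (1 + r)) =o[atTop] (id : ℝ → ℝ) := by
  have hshift : Tendsto (fun r : ℝ => 1 + r) atTop atTop :=
    tendsto_atTop_add_const_left _ 1 tendsto_id
  refine ((isLittleO_log_id_atTop.comp_tendsto hshift).trans_isBigO ?_).const_mul_left K
  refine Asymptotics.IsBigO.of_bound 2 ?_
  filter_upwards [eventually_ge_atTop 1] with r hr
  simp only [Function.comp_apply, id, norm_eq_abs]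
  rw [abs_of_nonneg (by linarith), abs_of_nonneg (by linarith)]
  linarith

theorem IsPuncturedPoissonSolution.exists_eq_sub_logPotential
    (hU : IsPuncturedPoissonSolution f U) (hf : LogIntegrable f) (hf₀ : ∀ z, 0 ≤ f z)
    (hF : Integrable F) (hF₀ : ∀ z, 0 ≤ F z) (hC : 0 ≤ C)
    (hUF : ∀ z, 1 ≤ ‖z‖ → U z ≤ F z + C * log (1 + ‖z‖)) :
    ∃ c, ∀ x, U x = c - logPotential f x := by
  have hK : 0 ≤ C + logMass f := add_nonneg hC (logMass_nonneg hf₀)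
  have hmono : MonotoneOn (fun r => (C + logMass f) * log (1 + r)) (Ici 0) := by
    intro r hr s _ hrs
    exact mul_le_mul_of_nonneg_left
      (log_le_log (by linarith [mem_Ici.1 hr]) (add_le_add_right hrs 1)) hK
  refine ⟨U 0 + logPotential f 0, fun x => eq_sub_of_add_eq ?_⟩
  refine eq_of_setIntegral_ball_eq (H := fun z => U z + logPotential f z)
    (fun x R => ?_) hF hF₀ hmono (isLittleO_const_mul_log_one_add _) (fun z hz => ?_)
    (hU.exists_setIntegral_ball_add_logPotential hf) x
  · exact (hU.continuous.locallyIntegrable.integrableOn_isCompact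
      (isCompact_closedBall x R)).mono_set ball_subset_closedBall |>.add
      (integrableOn_logPotential hf.integrable x R)
  · linarith [hUF z hz, hf.logPotential_le hf₀ z]

end Liouville

section LogMoment

variable {f U : ℂ → ℝ} {z y : ℂ} {β c ε η p q r t R : ℝ}

theorem integrableOn_norm_rpow_compl_closedBall_iff {E : Type*} [NormedAddCommGroup E]
    [NormedSpace ℝ E] [FiniteDimensional ℝ E] [Nontrivial E] [MeasurableSpace E] [BorelSpace E]
    (μ : Measure E) [μ.IsAddHaarMeasure] (hr : 0 < r) :
    IntegrableOn (fun x : E => ‖x‖ ^ q) (closedBall 0 r)ᶜ μ ↔ q < -(Module.finrank ℝ E : ℝ) := by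
  have hset : (closedBall (0 : E) r)ᶜ = norm ⁻¹' Ioi r := by ext; simp
  have hind : (closedBall (0 : E) r)ᶜ.indicator (fun x => ‖x‖ ^ q) =
      fun x => (Ioi r).indicator (fun t => t ^ q) ‖x‖ := by
    rw [hset]
    rfl
  have hpow : EqOn (fun t : ℝ => t ^ (Module.finrank ℝ E - 1) • (Ioi r).indicator (· ^ q) t)
      ((Ioi r).indicator fun t => t ^ (q + (Module.finrank ℝ E - 1 : ℕ))) (Ioi 0) := by
    intro t ht
    by_cases h : t ∈ Ioi r
    · simp only [indicator_of_mem h, smul_eq_mul, rpow_add_natCast (ne_of_gt ht), mul_comm]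
    · simp only [indicator_of_notMem h, smul_zero]
  rw [← integrable_indicator_iff measurableSet_closedBall.compl, hind,
    integrable_fun_norm_addHaar μ, integrableOn_congr_fun hpow measurableSet_Ioi, IntegrableOn,
    integrable_indicator_iff measurableSet_Ioi, IntegrableOn,
    Measure.restrict_restrict measurableSet_Ioi, ← IntegrableOn,
    inter_eq_left.2 (Ioi_subset_Ioi hr.le), integrableOn_Ioi_rpow_iff hr,
    Nat.cast_sub Module.finrank_pos, Nat.cast_one]
  constructor <;> intro h <;> linarith

theorem tendsto_setIntegral_compl_closedBall {E : Type*} [PseudoMetricSpace E] [MeasurableSpace E]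
    [OpensMeasurableSpace E] {μ : Measure E} {f : E → ℝ} (hf : Integrable f μ) (x : E) :
    Tendsto (fun R => ∫ y in (closedBall x R)ᶜ, f y ∂μ) atTop (𝓝 0) := by
  have hball : Tendsto (fun R => ∫ y in closedBall x R, f y ∂μ) atTop (𝓝 (∫ y, f y ∂μ)) :=
    (aecover_closedBall tendsto_id).integral_tendsto_of_countably_generated hf
  simpa only [setIntegral_compl measurableSet_closedBall hf, sub_self] using
    hball.const_sub (∫ y, f y ∂μ)

theorem LogIntegrable.add_two_lt_logMass (hf : LogIntegrable f) (hf₀ : ∀ y, 0 ≤ f y)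
    (hU : ∀ x, U x = c - logPotential f x)
    (hg : Integrable fun z => ‖z‖ ^ β * exp (U z)) : β + 2 < logMass f := by
  suffices h : IntegrableOn (fun z : ℂ => ‖z‖ ^ (β - logMass f)) (closedBall 0 1)ᶜ by
    rw [integrableOn_norm_rpow_compl_closedBall_iff volume one_pos,
      Complex.finrank_real_complex] at h
    push_cast at h
    linarith
  refine (hg.const_mul (exp (-c) * 2 ^ logMass f)).integrableOn.mono'
    (by fun_prop : Measurable fun z : ℂ => ‖z‖ ^ (β - logMass f)).aestronglyMeasurable ?_
  filter_upwards [ae_restrict_mem measurableSet_closedBall.compl] with z hz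
  have hz₁ : 1 < ‖z‖ := by simpa using hz
  have hz₀ : 0 < ‖z‖ := one_pos.trans hz₁
  have hgrowth : c - logMass f * log (2 * ‖z‖) ≤ U z := by
    rw [hU]
    refine sub_le_sub_left ((hf.logPotential_le hf₀ z).trans ?_) c
    exact mul_le_mul_of_nonneg_left (log_le_log (by positivity) (by linarith)) (logMass_nonneg hf₀)
  calc ‖‖z‖ ^ (β - logMass f)‖ = ‖z‖ ^ (β - logMass f) := norm_of_nonneg (by positivity)
    _ = exp (-c) * 2 ^ logMass f * (‖z‖ ^ β * exp (c - logMass f * log (2 * ‖z‖))) := by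
        rw [exp_sub, mul_comm (logMass f), ← rpow_def_of_pos (by positivity),
          mul_rpow zero_le_two hz₀.le, rpow_sub hz₀, exp_neg]
        field_simp
    _ ≤ exp (-c) * 2 ^ logMass f * (‖z‖ ^ β * exp (U z)) := by gcongr

/-- Jensen's inequality; the summand `1` makes up for the mass missing from `ε⁻¹ * w`. -/
theorem exp_integral_mul_le {α : Type*} [MeasurableSpace α] {μ : Measure α} {h w : α → ℝ}
    (hε : 0 < ε) (hw₀ : ∀ y, 0 ≤ w y) (hw : Integrable w μ)
    (hhw : Integrable (fun y => h y * w y) μ)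
    (hexp : Integrable (fun y => exp (ε * h y) * w y) μ) (hwε : ∫ y, w y ∂μ ≤ ε) :
    exp (∫ y, h y * w y ∂μ) ≤ 1 + ε⁻¹ * ∫ y, exp (ε * h y) * w y ∂μ := by
  set G := ∫ y, h y * w y ∂μ with hG
  have htangent (t : ℝ) : exp G * (1 - G + t) ≤ exp t := by
    calc exp G * (1 - G + t) ≤ exp G * exp (t - G) := by
          gcongr
          linarith [add_one_le_exp (t - G)]
      _ = exp t := by rw [← exp_add, add_sub_cancel]
  have hint : exp G * ((1 - G) * (∫ y, w y ∂μ) + ε * G) ≤ ∫ y, exp (ε * h y) * w y ∂μ := by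
    rw [hG, ← integral_const_mul, ← integral_const_mul ε, ← hG,
      ← integral_add (hw.const_mul _) (hhw.const_mul _), ← integral_const_mul]
    refine integral_mono (((hw.const_mul _).add (hhw.const_mul _)).const_mul _) hexp fun y => ?_
    simp only [← mul_assoc ε, ← add_mul, ← mul_assoc (exp G)]
    exact mul_le_mul_of_nonneg_right (htangent _) (hw₀ y)
  have hzero : (ε - ∫ y, w y ∂μ) * (exp G * (1 - G)) ≤ ε := by
    have h₁ : exp G * (1 - G) ≤ 1 := by simpa using htangent 0
    have h₂ : 0 ≤ ∫ y, w y ∂μ := integral_nonneg hw₀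
    nlinarith
  rw [← mul_le_mul_iff_right₀ hε, mul_add, mul_inv_cancel_left₀ hε.ne']
  linear_combination hint + hzero

/-- The kernel `‖w‖⁻¹`, cut off at distance `1` so that it is integrable on the plane. -/
noncomputable def truncInvNorm (w : ℂ) : ℝ := (ball 0 1).indicator (fun w => ‖w‖⁻¹) w

theorem truncInvNorm_nonneg (w : ℂ) : 0 ≤ truncInvNorm w :=
  indicator_nonneg (fun _ _ => by positivity) w

theorem integrable_truncInvNorm : Integrable truncInvNorm := by
  refine (integrable_indicator_iff measurableSet_ball).2
    (integrableOn_ball_of_norm_le_rpow (C := 1) (α := 1) (by simp)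
      (by rw [Complex.finrank_real_complex]; norm_num) (.of_forall fun w => ?_)
      (by fun_prop : Measurable fun w : ℂ => ‖w‖⁻¹).aestronglyMeasurable)
  rw [norm_inv, norm_norm, rpow_neg_one, one_mul]

theorem exp_posLog_inv_norm_le (w : ℂ) : exp (log⁺ ‖w‖⁻¹) ≤ 1 + truncInvNorm w := by
  rw [posLog_eq_log_max_one (by positivity), exp_log (by positivity)]
  refine max_le (le_add_of_nonneg_right (truncInvNorm_nonneg w)) ?_
  by_cases hw : w ∈ ball 0 1
  · simp [truncInvNorm, hw]
  · have hw₁ : 1 ≤ ‖w‖ := by simpa using hw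
    exact (inv_le_one_of_one_le₀ hw₁).trans (le_add_of_nonneg_right (truncInvNorm_nonneg w))

theorem exp_mul_neg_logKernel_le (hε₀ : 0 ≤ ε) (hε₁ : ε ≤ 1) (z y : ℂ) :
    exp (ε * -logKernel z y) ≤ (2 + ‖z‖) ^ ε * (1 + truncInvNorm (z - y)) := by
  have hpole : ε * log⁺ ‖z - y‖⁻¹ ≤ log⁺ ‖z - y‖⁻¹ := mul_le_of_le_one_left posLog_nonneg hε₁
  calc exp (ε * -logKernel z y) ≤ exp (log (2 + ‖z‖) * ε + log⁺ ‖z - y‖⁻¹) := by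
        rw [exp_le_exp]
        linarith [mul_le_mul_of_nonneg_left (neg_logKernel_le z y) hε₀]
    _ = (2 + ‖z‖) ^ ε * exp (log⁺ ‖z - y‖⁻¹) := by
        rw [exp_add, rpow_def_of_pos (by positivity)]
    _ ≤ (2 + ‖z‖) ^ ε * (1 + truncInvNorm (z - y)) := by
        gcongr
        exact exp_posLog_inv_norm_le _

theorem log_norm_sub_log_le_logKernel (hz : 0 < ‖z‖) (hy : 2 * ‖y‖ ≤ ‖z‖) (hyR : ‖y‖ ≤ R) :
    log ‖z‖ - log (2 * (1 + R)) ≤ logKernel z y := by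
  have hR : 0 ≤ R := (norm_nonneg y).trans hyR
  have hdist : log (‖z‖ / 2) ≤ log ‖z - y‖ :=
    log_le_log (by positivity) (by linarith [norm_sub_norm_le z y])
  have hnorm : log (1 + ‖y‖) ≤ log (1 + R) := log_le_log (by positivity) (by linarith)
  rw [log_div hz.ne' two_ne_zero] at hdist
  rw [logKernel, log_mul two_ne_zero (by positivity)]
  linarith

theorem LogIntegrable.exp_neg_setIntegral_closedBall_le (hf : LogIntegrable f)
    (hf₀ : ∀ y, 0 ≤ f y) (hR : 1 ≤ R) (hz : 2 * R ≤ ‖z‖)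
    (htail : (2 * π)⁻¹ * ∫ y in (closedBall 0 R)ᶜ, f y ≤ ε) :
    exp (-((2 * π)⁻¹ * ∫ y in closedBall 0 R, logKernel z y * f y)) ≤
      (2 * (1 + R)) ^ logMass f * ‖z‖ ^ (ε - logMass f) := by
  set ν := (2 * π)⁻¹ * ∫ y in (closedBall 0 R)ᶜ, f y with hν
  have hν₀ : 0 ≤ ν := mul_nonneg (by positivity) (integral_nonneg hf₀)
  have hz₁ : 1 ≤ ‖z‖ := by linarith
  have hmass : (2 * π)⁻¹ * ∫ y in closedBall 0 R, f y = logMass f - ν := by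
    rw [logMass, hν, ← integral_add_compl measurableSet_closedBall hf.integrable]
    ring
  have hnear : (log ‖z‖ - log (2 * (1 + R))) * ∫ y in closedBall 0 R, f y ≤
      ∫ y in closedBall 0 R, logKernel z y * f y := by
    rw [← integral_const_mul]
    refine setIntegral_mono_on (hf.integrable.const_mul _).integrableOn
      (hf.integrable_logKernel_mul z).integrableOn measurableSet_closedBall fun y hy => ?_
    have hyR : ‖y‖ ≤ R := by simpa using hy
    exact mul_le_mul_of_nonneg_right
      (log_norm_sub_log_le_logKernel (by positivity) (by linarith) hyR) (hf₀ y)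
  have hlow : (log ‖z‖ - log (2 * (1 + R))) * (logMass f - ν) ≤
      (2 * π)⁻¹ * ∫ y in closedBall 0 R, logKernel z y * f y := by
    rw [← hmass, mul_left_comm]
    gcongr
  rw [rpow_def_of_pos (by positivity), rpow_def_of_pos (by positivity), ← exp_add, exp_le_exp]
  have h₁ : ν * log ‖z‖ ≤ ε * log ‖z‖ := mul_le_mul_of_nonneg_right htail (log_nonneg hz₁)
  have h₂ : 0 ≤ ν * log (2 * (1 + R)) := mul_nonneg hν₀ (log_nonneg (by linarith))
  linear_combination hlow + h₁ + h₂

theorem integrable_exp_mul_neg_logKernel_mul (hf : Integrable f) (hε₀ : 0 ≤ ε) (hε₁ : ε ≤ 1)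
    (hconv : Integrable fun y => f y * truncInvNorm (z - y)) :
    Integrable fun y => exp (ε * -logKernel z y) * f y := by
  refine ((hf.norm.add hconv.norm).const_mul ((2 + ‖z‖) ^ ε)).mono' ?_ (.of_forall fun y => ?_)
  · exact (((measurable_logKernel.comp measurable_prodMk_left).neg.const_mul
      ε).exp.aestronglyMeasurable).mul hf.1
  · rw [norm_mul, norm_of_nonneg (exp_pos _).le]
    refine (mul_le_mul_of_nonneg_right (exp_mul_neg_logKernel_le hε₀ hε₁ z y)
      (norm_nonneg _)).trans_eq ?_
    rw [Pi.add_apply, norm_mul, norm_of_nonneg (truncInvNorm_nonneg _)]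
    ring

theorem integral_exp_mul_neg_logKernel_mul_le (hf : Integrable f) (hf₀ : ∀ y, 0 ≤ f y)
    (hε₀ : 0 ≤ ε) (hε₁ : ε ≤ 1) (hconv : Integrable fun y => f y * truncInvNorm (z - y)) :
    ∫ y, exp (ε * -logKernel z y) * f y ≤
      (2 + ‖z‖) ^ ε * ((∫ y, f y) + ∫ y, f y * truncInvNorm (z - y)) := by
  rw [← integral_add hf hconv, ← integral_const_mul]
  refine integral_mono (integrable_exp_mul_neg_logKernel_mul hf hε₀ hε₁ hconv)
    ((hf.add hconv).const_mul _) fun y => ?_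
  refine (mul_le_mul_of_nonneg_right (exp_mul_neg_logKernel_le hε₀ hε₁ z y) (hf₀ y)).trans_eq ?_
  ring

theorem LogIntegrable.exp_neg_setIntegral_le (hf : LogIntegrable f) (hf₀ : ∀ y, 0 ≤ f y)
    (hε₀ : 0 < ε) (hε₁ : ε ≤ 1) {S : Set ℂ} (htail : (2 * π)⁻¹ * ∫ y in S, f y ≤ ε)
    (hconv : Integrable fun y => f y * truncInvNorm (z - y)) :
    exp (-((2 * π)⁻¹ * ∫ y in S, logKernel z y * f y)) ≤
      (2 + ‖z‖) ^ ε * (1 + ε⁻¹ * (logMass f + (2 * π)⁻¹ * ∫ y, f y * truncInvNorm (z - y))) := by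
  have hexp := integrable_exp_mul_neg_logKernel_mul hf.integrable hε₀.le hε₁ hconv
  have hker : Integrable fun y => -logKernel z y * f y := by
    simpa only [neg_mul, Pi.neg_def] using (hf.integrable_logKernel_mul z).neg
  have hjensen := exp_integral_mul_le (μ := volume.restrict S) (h := fun y => -logKernel z y)
    (w := fun y => (2 * π)⁻¹ * f y) hε₀ (fun y => mul_nonneg (by positivity) (hf₀ y))
    (hf.integrable.const_mul _).restrict
    (by simpa only [mul_left_comm _ (2 * π)⁻¹] using (hker.const_mul _).restrict)
    (by simpa only [mul_left_comm _ (2 * π)⁻¹] using (hexp.const_mul _).restrict)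
    (by rwa [integral_const_mul])
  simp only [mul_left_comm _ (2 * π)⁻¹, integral_const_mul] at hjensen
  simp only [neg_mul, integral_neg, mul_neg] at hjensen
  have hfar : ∫ y in S, exp (-(ε * logKernel z y)) * f y ≤
      (2 + ‖z‖) ^ ε * ((∫ y, f y) + ∫ y, f y * truncInvNorm (z - y)) := by
    simp only [← mul_neg]
    exact (setIntegral_le_integral hexp
      (.of_forall fun y => mul_nonneg (exp_pos _).le (hf₀ y))).trans
      (integral_exp_mul_neg_logKernel_mul_le hf.integrable hf₀ hε₀.le hε₁ hconv)
  have hpow : 1 ≤ (2 + ‖z‖) ^ ε := one_le_rpow (by linarith [norm_nonneg z]) hε₀.le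
  rw [logMass]
  linear_combination hjensen + hpow + ε⁻¹ * (2 * π)⁻¹ * hfar

/-- Jensen's inequality is applied only to the part of the potential created far from the origin,
whose mass is too small for its exponential to have a nonintegrable pole. -/
theorem LogIntegrable.exists_exp_neg_logPotential_le (hf : LogIntegrable f) (hf₀ : ∀ y, 0 ≤ f y)
    (hp : -logMass f < p) :
    ∃ K R, 0 ≤ K ∧ 1 ≤ R ∧ ∀ z : ℂ, R ≤ ‖z‖ → Integrable (fun y => f y * truncInvNorm (z - y)) →
      exp (-logPotential f z) ≤ K * ‖z‖ ^ p * (1 + ∫ y, f y * truncInvNorm (z - y)) := by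
  set m := logMass f
  have hm₀ : 0 ≤ m := logMass_nonneg hf₀
  set ε := min 1 ((p + m) / 2)
  have hε₀ : 0 < ε := lt_min one_pos (by linarith)
  have hεp : 2 * ε - m ≤ p := by linarith [min_le_right 1 ((p + m) / 2)]
  obtain ⟨R, htail, hR⟩ := ((((tendsto_setIntegral_compl_closedBall hf.integrable 0).const_mul
    (2 * π)⁻¹).eventually_le_const (by simpa using hε₀)).and (eventually_ge_atTop 1)).exists
  refine ⟨(2 * (1 + R)) ^ m * 2 ^ ε * (1 + ε⁻¹ * (m + (2 * π)⁻¹)), 2 * R, by positivity,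
    by linarith, fun z hz hconv => ?_⟩
  have hz₁ : 1 ≤ ‖z‖ := by linarith
  have hz₀ : 0 < ‖z‖ := by linarith
  set I := ∫ y, f y * truncInvNorm (z - y)
  have hI₀ : 0 ≤ I := integral_nonneg fun y => mul_nonneg (hf₀ y) (truncInvNorm_nonneg _)
  have hnear := hf.exp_neg_setIntegral_closedBall_le hf₀ hR hz htail
  have hfar := hf.exp_neg_setIntegral_le hf₀ hε₀ (min_le_left _ _) htail hconv
  have hfactor : 1 + ε⁻¹ * (m + (2 * π)⁻¹ * I) ≤ (1 + ε⁻¹ * (m + (2 * π)⁻¹)) * (1 + I) := by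
    have : 0 ≤ I + ε⁻¹ * (m * I + (2 * π)⁻¹) := by positivity
    linarith
  calc exp (-logPotential f z)
      = exp (-((2 * π)⁻¹ * ∫ y in closedBall 0 R, logKernel z y * f y)) *
          exp (-((2 * π)⁻¹ * ∫ y in (closedBall 0 R)ᶜ, logKernel z y * f y)) := by
        rw [← exp_add, logPotential,
          ← integral_add_compl measurableSet_closedBall (hf.integrable_logKernel_mul z), mul_add,
          neg_add]
    _ ≤ (2 * (1 + R)) ^ m * ‖z‖ ^ (ε - m) *
          ((2 + ‖z‖) ^ ε * (1 + ε⁻¹ * (m + (2 * π)⁻¹ * I))) := by gcongr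
    _ ≤ (2 * (1 + R)) ^ m * ‖z‖ ^ (ε - m) *
          ((2 * ‖z‖) ^ ε * ((1 + ε⁻¹ * (m + (2 * π)⁻¹)) * (1 + I))) := by
        gcongr
        linarith
    _ = (2 * (1 + R)) ^ m * 2 ^ ε * (1 + ε⁻¹ * (m + (2 * π)⁻¹)) * ‖z‖ ^ (2 * ε - m) * (1 + I) := by
        rw [mul_rpow zero_le_two hz₀.le, show 2 * ε - m = ε - m + ε by ring, rpow_add hz₀]
        ring
    _ ≤ (2 * (1 + R)) ^ m * 2 ^ ε * (1 + ε⁻¹ * (m + (2 * π)⁻¹)) * ‖z‖ ^ p * (1 + I) := by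
        gcongr

theorem log_one_add_le_mul_rpow (hη : 0 < η) (ht : 1 ≤ t) : log (1 + t) ≤ 2 ^ η / η * t ^ η :=
  calc log (1 + t) ≤ log (2 * t) := log_le_log (by positivity) (by linarith)
    _ ≤ (2 * t) ^ η / η := log_le_rpow_div (by positivity) hη
    _ = 2 ^ η / η * t ^ η := by rw [mul_rpow zero_le_two (by positivity)]; ring

theorem log_one_add_mul_rpow_mul_le {I K v : ℝ} (hη : 0 < η) (ht : 1 ≤ t) (hI : 0 ≤ I)
    (hK : 0 ≤ K) (hp : η + β + p ≤ 0) (hv : v ≤ K * t ^ p * (1 + I)) :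
    log (1 + t) * (t ^ β * v) ≤ 2 ^ η / η * K * (t ^ (η + β + p) + I) := by
  have ht₀ : 0 < t := by linarith
  have hpow : t ^ (η + β + p) ≤ 1 := rpow_le_one_of_one_le_of_nonpos ht hp
  have hlog₀ : 0 ≤ log (1 + t) := log_nonneg (by linarith)
  calc log (1 + t) * (t ^ β * v)
      ≤ log (1 + t) * (t ^ β * (K * t ^ p * (1 + I))) := by gcongr
    _ ≤ 2 ^ η / η * t ^ η * (t ^ β * (K * t ^ p * (1 + I))) := by
        gcongr
        exact log_one_add_le_mul_rpow hη ht
    _ = 2 ^ η / η * K * (t ^ (η + β + p) * (1 + I)) := by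
        rw [rpow_add ht₀ (η + β), rpow_add ht₀ η]
        ring
    _ ≤ 2 ^ η / η * K * (t ^ (η + β + p) + I) := by
        gcongr
        nlinarith

theorem LogIntegrable.exists_integrableOn_log_mul (hf : LogIntegrable f) (hf₀ : ∀ y, 0 ≤ f y)
    (hU : ∀ x, U x = c - logPotential f x) (hg : Integrable fun z => ‖z‖ ^ β * exp (U z)) :
    ∃ R, IntegrableOn (fun z => log (1 + ‖z‖) * (‖z‖ ^ β * exp (U z))) (closedBall 0 R)ᶜ := by
  set m := logMass f
  set η := (m - (β + 2)) / 4 with hη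
  have hη₀ : 0 < η := by linarith [hf.add_two_lt_logMass hf₀ hU hg]
  have hexponent : η + β + (-m + 2 * η) = -2 - η := by linarith
  obtain ⟨K, R, hK, hR, hle⟩ :=
    hf.exists_exp_neg_logPotential_le hf₀ (show -m < -m + 2 * η by linarith)
  have hconv : Integrable (fun p : ℂ × ℂ => f p.2 * truncInvNorm (p.1 - p.2))
      (volume.prod volume) :=
    hf.integrable.convolution_integrand (ContinuousLinearMap.mul ℝ ℝ) integrable_truncInvNorm
  have hpow : IntegrableOn (fun z : ℂ => ‖z‖ ^ (-2 - η)) (closedBall 0 R)ᶜ := by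
    rw [integrableOn_norm_rpow_compl_closedBall_iff volume (by linarith),
      Complex.finrank_real_complex]
    push_cast
    linarith
  refine ⟨R, ((hpow.add hconv.integral_prod_left.integrableOn).const_mul
    (2 ^ η / η * (exp c * K))).mono' ?_ ?_⟩
  · exact ((by fun_prop : Measurable fun z : ℂ => log (1 + ‖z‖)).aestronglyMeasurable.mul
      hg.1).restrict
  filter_upwards [ae_restrict_mem measurableSet_closedBall.compl,
    ae_restrict_of_ae hconv.prod_right_ae] with z hzR hz
  have hRz : R < ‖z‖ := by simpa using hzR
  have hI : 0 ≤ ∫ y, f y * truncInvNorm (z - y) :=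
    integral_nonneg fun y => mul_nonneg (hf₀ y) (truncInvNorm_nonneg _)
  rw [norm_of_nonneg (mul_nonneg (log_nonneg (by linarith)) (by positivity)), Pi.add_apply,
    ← hexponent]
  refine log_one_add_mul_rpow_mul_le hη₀ (hR.trans hRz.le) hI (by positivity) (by linarith) ?_
  rw [hU, sub_eq_add_neg, exp_add, mul_assoc (exp c), mul_assoc (exp c)]
  gcongr
  exact hle z hRz.le hz

theorem LogIntegrable.integrable_log_mul_rpow_mul_exp (hf : LogIntegrable f) (hf₀ : ∀ y, 0 ≤ f y)
    (hU : ∀ x, U x = c - logPotential f x) (hg : Integrable fun z => ‖z‖ ^ β * exp (U z)) :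
    Integrable fun z => log (1 + ‖z‖) * (‖z‖ ^ β * exp (U z)) := by
  obtain ⟨R, hout⟩ := hf.exists_integrableOn_log_mul hf₀ hU hg
  rw [← integrableOn_univ, ← union_compl_self (closedBall (0 : ℂ) R)]
  refine IntegrableOn.union ((hg.const_mul (log (1 + R))).integrableOn.mono' ?_ ?_) hout
  · exact ((by fun_prop : Measurable fun z : ℂ => log (1 + ‖z‖)).aestronglyMeasurable.mul
      hg.1).restrict
  · filter_upwards [ae_restrict_mem measurableSet_closedBall] with z hz
    have hzR : ‖z‖ ≤ R := by simpa using hz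
    rw [norm_of_nonneg (mul_nonneg (log_nonneg (by linarith [norm_nonneg z])) (by positivity))]
    gcongr

end LogMoment

section SingularDensity

variable {f h : ℂ → ℝ} {x : ℂ} {β r t : ℝ}

theorem integrable_posLog_mul_of_integrableOn_closedBall (hf : Integrable f) (hr : 0 < r)
    (hloc : IntegrableOn (fun y => log⁺ ‖x - y‖⁻¹ * f y) (closedBall x r)) :
    Integrable fun y => log⁺ ‖x - y‖⁻¹ * f y := by
  rw [← integrableOn_univ, ← union_compl_self (closedBall x r)]
  refine hloc.union ((hf.norm.const_mul (log⁺ r⁻¹)).integrableOn.mono' ?_ ?_)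
  · exact (by fun_prop : Measurable fun y : ℂ => log⁺ ‖x - y‖⁻¹).aestronglyMeasurable.mul
      hf.1.restrict
  · filter_upwards [ae_restrict_mem measurableSet_closedBall.compl] with y hy
    have hry : r ≤ ‖x - y‖ := by
      rw [mem_compl_iff, mem_closedBall_iff_norm', not_le] at hy
      exact hy.le
    rw [norm_mul, norm_of_nonneg posLog_nonneg]
    gcongr

theorem integrableOn_posLog_mul_norm_rpow_mul (hβ : -2 < β) (hh : Continuous h) :
    IntegrableOn (fun y => log⁺ ‖0 - y‖⁻¹ * (‖y‖ ^ β * h y)) (closedBall 0 r) := by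
  have := (integrable_norm_rpow_mul_posLog hβ).integrableOn.mul_continuousOn hh.continuousOn
    (isCompact_closedBall 0 r)
  refine this.congr_fun (fun y _ => ?_) measurableSet_closedBall
  simp only [zero_sub, norm_neg]
  ring

theorem integrableOn_posLog_mul_of_continuousOn (hf : ContinuousOn f (closedBall x r)) :
    IntegrableOn (fun y => log⁺ ‖x - y‖⁻¹ * f y) (closedBall x r) :=
  (integrable_posLog_inv_norm.comp_sub_left x).integrableOn.mul_continuousOn hf
    (isCompact_closedBall x r)

theorem logIntegrable_norm_rpow_mul (hβ : -2 < β) (hh : Continuous h)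
    (hint : Integrable fun y => ‖y‖ ^ β * h y) : LogIntegrable fun y => ‖y‖ ^ β * h y := by
  refine ⟨hint, fun x => ?_⟩
  rcases eq_or_ne x 0 with rfl | hx
  · exact integrable_posLog_mul_of_integrableOn_closedBall hint one_pos
      (integrableOn_posLog_mul_norm_rpow_mul hβ hh)
  have hx₀ : 0 < ‖x‖ := norm_pos_iff.2 hx
  refine integrable_posLog_mul_of_integrableOn_closedBall hint (half_pos hx₀)
    (integrableOn_posLog_mul_of_continuousOn (ContinuousOn.mul ?_ hh.continuousOn))
  refine continuous_norm.continuousOn.rpow_const fun y hy => .inl (norm_ne_zero_iff.2 ?_)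
  rintro rfl
  rw [mem_closedBall, dist_zero_left] at hy
  linarith

theorem integrable_mul_sum_const_mul {α ι : Type*} [MeasurableSpace α] {μ : Measure α}
    {s : Finset ι} {w : α → ℝ} {F : ι → α → ℝ} (a : ι → ℝ)
    (hF : ∀ i ∈ s, Integrable (fun y => w y * F i y) μ) :
    Integrable (fun y => w y * ∑ i ∈ s, a i * F i y) μ := by
  simp only [Finset.mul_sum, mul_left_comm (w _)]
  exact integrable_finsetSum _ fun i hi => (hF i hi).const_mul _

theorem LogIntegrable.sum_const_mul {ι : Type*} {s : Finset ι} {F : ι → ℂ → ℝ} (a : ι → ℝ)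
    (hF : ∀ i ∈ s, LogIntegrable (F i)) : LogIntegrable fun y => ∑ i ∈ s, a i * F i y where
  integrable := integrable_finsetSum _ fun i hi => (hF i hi).integrable.const_mul _
  integrable_posLog_mul x :=
    integrable_mul_sum_const_mul a fun i hi => (hF i hi).integrable_posLog_mul x

theorem LogIntegrable.logPotential_eq (hf : LogIntegrable f)
    (hlog : Integrable fun y => log (1 + ‖y‖) * f y) (z : ℂ) :
    logPotential f z = 1 / (2 * π) * (∫ y, log ‖z - y‖ * f y) -
      (2 * π)⁻¹ * ∫ y, log (1 + ‖y‖) * f y := by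
  have hsplit : ∫ y, log ‖z - y‖ * f y =
      (∫ y, logKernel z y * f y) + ∫ y, log (1 + ‖y‖) * f y := by
    rw [← integral_add (hf.integrable_logKernel_mul z) hlog]
    simp only [logKernel, ← add_mul, sub_add_cancel]
  rw [hsplit, logPotential]
  ring

theorem le_rpow_mul_exp_add_abs_mul_log (β t : ℝ) (hr : 1 ≤ r) :
    t ≤ r ^ β * exp t + |β| * log (1 + r) := by
  have hr₀ : 0 < r := by linarith
  have htangent : log r * β + t ≤ r ^ β * exp t := by
    rw [rpow_def_of_pos hr₀, ← exp_add]
    linarith [add_one_le_exp (log r * β + t)]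
  have hlog : -β * log r ≤ |β| * log (1 + r) :=
    mul_le_mul (neg_le_abs β) (log_le_log hr₀ (by linarith)) (log_nonneg hr) (abs_nonneg β)
  linarith

end SingularDensity

section LiouvilleSystem

variable {ι : Type*} [Fintype ι] {A : Matrix ι ι ℝ} {β : ι → ℝ} {U : ι → ℂ → ℝ}

/-- The right-hand side of the `i`-th equation `-ΔUᵢ = ∑ⱼ aᵢⱼ |z|^βⱼ exp Uⱼ` of the singular
Liouville system, on the complex plane. -/
noncomputable def liouvilleDensity (A : Matrix ι ι ℝ) (β : ι → ℝ) (U : ι → ℂ → ℝ) (i : ι)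
    (z : ℂ) : ℝ :=
  ∑ j, A i j * (‖z‖ ^ β j * exp (U j z))

theorem liouvilleDensity_nonneg (hA : ∀ i j, 0 ≤ A i j) (i : ι) (z : ℂ) :
    0 ≤ liouvilleDensity A β U i z :=
  Finset.sum_nonneg fun j _ => mul_nonneg (hA i j) (by positivity)

theorem logIntegrable_liouvilleDensity (hβ : ∀ i, -2 < β i) (hU : ∀ i, Continuous (U i))
    (hg : ∀ i, Integrable fun z => ‖z‖ ^ β i * exp (U i z)) (i : ι) :
    LogIntegrable (liouvilleDensity A β U i) :=
  .sum_const_mul (A i) fun j _ =>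
    logIntegrable_norm_rpow_mul (hβ j) (continuous_exp.comp (hU j)) (hg j)

theorem exists_eq_sub_logPotential_liouvilleDensity (hA : ∀ i j, 0 ≤ A i j)
    (hβ : ∀ i, -2 < β i)
    (hU : ∀ i, IsPuncturedPoissonSolution (liouvilleDensity A β U i) (U i))
    (hg : ∀ i, Integrable fun z => ‖z‖ ^ β i * exp (U i z)) (i : ι) :
    ∃ c, ∀ z, U i z = c - logPotential (liouvilleDensity A β U i) z :=
  (hU i).exists_eq_sub_logPotential
    (logIntegrable_liouvilleDensity hβ (fun j => (hU j).continuous) hg i)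
    (liouvilleDensity_nonneg hA i) (hg i) (fun _ => by positivity) (abs_nonneg (β i))
    fun z hz => le_rpow_mul_exp_add_abs_mul_log (β i) (U i z) hz

theorem integrable_log_mul_liouvilleDensity (hA : ∀ i j, 0 ≤ A i j) (hβ : ∀ i, -2 < β i)
    (hU : ∀ i, IsPuncturedPoissonSolution (liouvilleDensity A β U i) (U i))
    (hg : ∀ i, Integrable fun z => ‖z‖ ^ β i * exp (U i z)) (i : ι) :
    Integrable fun z => log (1 + ‖z‖) * liouvilleDensity A β U i z := by
  refine integrable_mul_sum_const_mul (A i) fun j _ => ?_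
  obtain ⟨c, hc⟩ := exists_eq_sub_logPotential_liouvilleDensity hA hβ hU hg j
  exact (logIntegrable_liouvilleDensity hβ (fun k => (hU k).continuous) hg j
    ).integrable_log_mul_rpow_mul_exp (liouvilleDensity_nonneg hA j) hc (hg j)

theorem exists_eq_neg_integral_log_mul_liouvilleDensity_add (hA : ∀ i j, 0 ≤ A i j)
    (hβ : ∀ i, -2 < β i)
    (hU : ∀ i, IsPuncturedPoissonSolution (liouvilleDensity A β U i) (U i))
    (hg : ∀ i, Integrable fun z => ‖z‖ ^ β i * exp (U i z)) (i : ι) :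
    ∃ c, ∀ z, U i z =
      -(1 / (2 * π)) * (∫ y, log ‖z - y‖ * liouvilleDensity A β U i y) + c := by
  obtain ⟨c, hc⟩ := exists_eq_sub_logPotential_liouvilleDensity hA hβ hU hg i
  have hf := logIntegrable_liouvilleDensity (A := A) hβ (fun j => (hU j).continuous) hg i
  refine ⟨c + (2 * π)⁻¹ * ∫ y, log (1 + ‖y‖) * liouvilleDensity A β U i y, fun z => ?_⟩
  rw [hc, hf.logPotential_eq (integrable_log_mul_liouvilleDensity hA hβ hU hg i)]
  ring

end LiouvilleSystem

section RealPlane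

open InnerProductSpace Laplacian

theorem nrm_re_im (z : ℂ) : nrm (z.re, z.im) = ‖z‖ := by
  rw [nrm, Complex.norm_eq_sqrt_sq_add_sq]

theorem lap_re_im {v : ℝ × ℝ → ℝ} {z : ℂ} (hv : ContDiffAt ℝ 2 v (z.re, z.im)) :
    lap v (z.re, z.im) = Δ (fun z : ℂ => v (z.re, z.im)) z := by
  have hV : ContDiffAt ℝ 2 (fun z : ℂ => v (z.re, z.im)) z :=
    hv.comp z Complex.equivRealProdCLM.contDiff.contDiffAt
  have hre := deriv_deriv_comp_eq_fderiv_fderiv (γ := fun s : ℝ => (⟨s, z.im⟩ : ℂ)) (s := z.re)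
    hV fun r => by
      simpa [Complex.mk_eq_add_mul_I] using
        (hasDerivAt_id r).ofReal_comp.add_const (z.im * Complex.I)
  have him := deriv_deriv_comp_eq_fderiv_fderiv (γ := fun t : ℝ => (⟨z.re, t⟩ : ℂ)) (s := z.im)
    hV fun r => by
      simpa [Complex.mk_eq_add_mul_I] using
        ((hasDerivAt_id r).ofReal_comp.mul_const Complex.I).const_add (z.re : ℂ)
  rw [laplacian_eq_fderiv_fderiv, ← hre, ← him, lap]

theorem integrable_comp_re_im {g : ℝ × ℝ → ℝ} (hg : Integrable g) :
    Integrable fun z : ℂ => g (z.re, z.im) :=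
  Complex.volume_preserving_equiv_real_prod.integrable_comp_of_integrable hg

theorem integral_comp_re_im (g : ℝ × ℝ → ℝ) : ∫ z : ℂ, g (z.re, z.im) = ∫ x, g x :=
  Complex.volume_preserving_equiv_real_prod.integral_comp
    Complex.measurableEquivRealProd.measurableEmbedding g

variable {n : ℕ} {A : Matrix (Fin n) (Fin n) ℝ} {β : Fin n → ℝ} {u : Fin n → ℝ × ℝ → ℝ}

theorem liouvilleDensity_re_im (i : Fin n) (z : ℂ) :
    liouvilleDensity A β (fun j z => u j (z.re, z.im)) i z =
      ∑ j, A i j * nrm (z.re, z.im) ^ β j * exp (u j (z.re, z.im)) := by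
  simp only [liouvilleDensity, nrm_re_im, mul_assoc]

theorem isPuncturedPoissonSolution_of_pdeSolution (hu : PDESolution A β u) (i : Fin n) :
    IsPuncturedPoissonSolution (liouvilleDensity A β (fun j z => u j (z.re, z.im)) i)
      fun z => u i (z.re, z.im) := by
  obtain ⟨hcont, hsmooth, heq, -⟩ := hu
  have hne {z : ℂ} (hz : z ≠ 0) : (z.re, z.im) ≠ 0 := Complex.equivRealProdCLM.map_ne_zero_iff.2 hz
  refine ⟨(hcont i).comp Complex.equivRealProdCLM.continuous, fun z hz =>
    (hsmooth i _ (hne hz)).comp z Complex.equivRealProdCLM.contDiff.contDiffAt, fun z hz => ?_⟩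
  rw [← lap_re_im (hsmooth i _ (hne hz)), liouvilleDensity_re_im]
  exact eq_neg_of_add_eq_zero_left (heq i _ (hne hz))

end RealPlane

end SingularLiouville

open SingularLiouville in
theorem integral_representation_of_solutions_general {n : ℕ} (A : Matrix (Fin n) (Fin n) ℝ)
    (β : Fin n → ℝ) (hA : ∀ i j, 0 ≤ A i j) (hβ : ∀ i, -2 < β i)
    (u : Fin n → ℝ × ℝ → ℝ) (hu : PDESolution A β u) :
    ∃ c : Fin n → ℝ, ∀ i, ∀ x : ℝ × ℝ,
      u i x = -(1 / (2 * Real.pi)) *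
          (∫ y : ℝ × ℝ, Real.log (nrm (x - y)) * ∑ j, A i j * nrm y ^ β j * Real.exp (u j y))
        + c i := by
  have hg (i : Fin n) : Integrable fun z : ℂ => ‖z‖ ^ β i * Real.exp (u i (z.re, z.im)) := by
    simpa only [nrm_re_im] using integrable_comp_re_im (hu.2.2.2 i)
  choose c hc using exists_eq_neg_integral_log_mul_liouvilleDensity_add hA hβ
    (isPuncturedPoissonSolution_of_pdeSolution hu) hg
  refine ⟨c, fun i x => ?_⟩
  rw [hc i ⟨x.1, x.2⟩, ← integral_comp_re_im]
  simp only [liouvilleDensity_re_im, ← nrm_re_im, Complex.sub_re, Complex.sub_im]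
  rfl

theorem integral_representation_of_solutions {n : ℕ} (hn : 0 < n)
    (A : Matrix (Fin n) (Fin n) ℝ) (β : Fin n → ℝ)
    (hA : H1 A) (hβ : ∀ i, -2 < β i)
    (u : Fin n → ℝ × ℝ → ℝ) (hu : PDESolution A β u) :
    ∃ c : Fin n → ℝ, ∀ i, ∀ x : ℝ × ℝ,
      u i x = -(1 / (2 * Real.pi)) *
          (∫ y : ℝ × ℝ, Real.log (nrm (x - y)) * ∑ j, A i j * nrm y ^ β j * Real.exp (u j y))
        + c i :=
  integral_representation_of_solutions_general A β hA.2.1 hβ u hu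
end

section
/- Let A satisfy (H1), β_1,...,β_n > -2, and let u be a finite-energy radial solution of the singular Liouville system. If φ = (φ_1,...,φ_n) satisfies the linearized system (r φ_i'(r))' + Σ_{j=1}^n a_{ij} r^{β_j+1} e^{u_j(r)} φ_j(r) = 0 for r > 0 and all i ∈ I, then φ_i(r) = O(log r) as r → ∞, for every i ∈ I. -/
open Set MeasureTheory

/-- Radial solution of the singular Liouville system, with the finite-energy condition. -/
def RadialSolution {n : ℕ} (A : Matrix (Fin n) (Fin n) ℝ) (β : Fin n → ℝ)
    (u : Fin n → ℝ → ℝ) : Prop :=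
  (∀ i, ∀ r > (0:ℝ), ContDiffAt ℝ 2 (u i) r) ∧
  (∀ i, ∀ r > (0:ℝ),
    deriv (deriv (u i)) r + (1 / r) * deriv (u i) r
      + ∑ j, A i j * r ^ β j * Real.exp (u j r) = 0) ∧
  (∀ i, IntegrableOn (fun r : ℝ => r ^ (β i + 1) * Real.exp (u i r)) (Set.Ioi 0))

/-- Solution of the linearized system (rφ_i')' + Σ_j a_{ij} r^{β_j+1} e^{u_j} φ_j = 0. -/
def LinearizedSolution {n : ℕ} (A : Matrix (Fin n) (Fin n) ℝ) (β : Fin n → ℝ)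
    (u φ : Fin n → ℝ → ℝ) : Prop :=
  (∀ i, ∀ r > (0:ℝ), ContDiffAt ℝ 2 (φ i) r) ∧
  (∀ i, ∀ r > (0:ℝ),
    deriv (fun s => s * deriv (φ i) s) r
      + ∑ j, A i j * r ^ (β j + 1) * Real.exp (u j r) * φ j r = 0)

/-!
In the variable `t = log r` the operator `r (r f')'` becomes `d²f/dt²`. The Liouville system
with nonnegative coefficients thus makes `w j = log (r ^ (β j + 2) * exp (u j))` concave in `t`,
while the finite energy makes `exp (w j)` integrable at `+∞`. A concave function with integrable
exponential eventually decreases at a positive linear rate, so `t * exp (w j)` is integrable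
too.

The linearized system becomes `y'' = -A (exp w * y)`, whence `‖y''‖ ≤ b ‖y‖` with `t * b t`
integrable at `+∞`. Choose `T ≥ 1` with `∫_T^∞ |t * b t| dt ≤ 1 / 2` and let `M` be the maximum
of `‖y'‖` on `[T, S]`. Then `‖y t‖ ≤ (‖y T‖ + M) t` on `[T, S]`, and integrating `y''` gives
`M ≤ ‖y' T‖ + (‖y T‖ + M) / 2`, a bound on `M` independent of `S`. Hence `y` grows at most
linearly in `t = log r`.
-/

open Filter Asymptotics Real

section SecondOrderODE

variable {E : Type*} [NormedAddCommGroup E] [NormedSpace ℝ E] {y : ℝ → E} {b : ℝ → ℝ} {S T : ℝ}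

lemma norm_le_mul_of_norm_deriv_le {M s : ℝ} (hT : 1 ≤ T)
    (hy : ∀ t ∈ Icc T S, DifferentiableAt ℝ y t) (hM : ∀ t ∈ Icc T S, ‖deriv y t‖ ≤ M)
    (hs : s ∈ Icc T S) : ‖y s‖ ≤ (‖y T‖ + M) * s := by
  have hM₀ : 0 ≤ M := (norm_nonneg _).trans (hM s hs)
  have hmvt : ‖y s - y T‖ ≤ M * (s - T) :=
    (Convex.norm_image_sub_le_of_norm_deriv_le hy hM (convex_Icc T S)
      (left_mem_Icc.2 (hs.1.trans hs.2)) hs).trans_eq (by rw [norm_of_nonneg (sub_nonneg.2 hs.1)])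
  calc
    ‖y s‖ ≤ ‖y T‖ + ‖y s - y T‖ := norm_le_norm_add_norm_sub' _ _
    _ ≤ ‖y T‖ * s + M * s := by
      gcongr
      · exact le_mul_of_one_le_right (norm_nonneg _) (hT.trans hs.1)
      · exact hmvt.trans (by gcongr; linarith)
    _ = (‖y T‖ + M) * s := by ring

lemma norm_deriv_le_of_integral_abs_mul_le_half (hT : 1 ≤ T) (hTS : T ≤ S)
    (hy : ∀ t ∈ Icc T S, DifferentiableAt ℝ y t)
    (hy' : ∀ t ∈ Icc T S, DifferentiableAt ℝ (deriv y) t)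
    (hyb : ∀ t ∈ Icc T S, ‖deriv (deriv y) t‖ ≤ b t * ‖y t‖)
    (hb : IntervalIntegrable (fun t ↦ |t * b t|) volume T S)
    (hb_half : ∫ t in T..S, |t * b t| ≤ 1 / 2) :
    ‖deriv y S‖ ≤ ‖y T‖ + 2 * ‖deriv y T‖ := by
  have hcont : ContinuousOn (deriv y) (Icc T S) := fun t ht ↦
    (hy' t ht).continuousAt.continuousWithinAt
  obtain ⟨m, hm, hmax⟩ := isCompact_Icc.exists_isMaxOn (nonempty_Icc.2 hTS) hcont.norm
  have hsub : Icc T m ⊆ Icc T S := Icc_subset_Icc_right hm.2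
  set K := ‖y T‖ + ‖deriv y m‖
  have : 0 ≤ K := by positivity
  have hbound : ∀ t ∈ Icc T S, ‖deriv (deriv y) t‖ ≤ K * |t * b t| := fun t ht ↦ by
    have ht₀ : 0 ≤ t := by linarith [ht.1]
    calc
      ‖deriv (deriv y) t‖ ≤ b t * ‖y t‖ := hyb t ht
      _ ≤ |b t| * (K * t) := by
        gcongr
        · exact le_abs_self _
        · exact norm_le_mul_of_norm_deriv_le hT hy (fun s hs ↦ hmax hs) ht
      _ = K * |t * b t| := by rw [abs_mul, abs_of_nonneg ht₀]; ring
  have hincr : ‖deriv y m - deriv y T‖ ≤ K * (1 / 2) := calc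
    ‖deriv y m - deriv y T‖ ≤ ∫ t in T..m, K * |t * b t| :=
      norm_sub_le_integral_of_norm_deriv_le_of_le hm.1 (hcont.mono hsub)
        (fun t ht ↦ (hy' t (hsub (Ioo_subset_Icc_self ht))).differentiableWithinAt)
        (ae_of_all _ fun t ht ↦ hbound t (hsub (Ioo_subset_Icc_self ht)))
        ((hb.mono_set (by rwa [uIcc_of_le hm.1, uIcc_of_le hTS])).const_mul K)
    _ = K * ∫ t in T..m, |t * b t| := intervalIntegral.integral_const_mul _ _
    _ ≤ K * (1 / 2) := by
      gcongr
      exact (intervalIntegral.integral_mono_interval le_rfl hm.1 hm.2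
        (ae_of_all _ fun t ↦ abs_nonneg _) hb).trans hb_half
  have htri : ‖deriv y m‖ ≤ ‖deriv y T‖ + ‖deriv y m - deriv y T‖ := norm_le_norm_add_norm_sub' _ _
  calc
    ‖deriv y S‖ ≤ ‖deriv y m‖ := hmax (right_mem_Icc.2 hTS)
    _ ≤ ‖y T‖ + 2 * ‖deriv y T‖ := by linarith

theorem isBigO_id_of_norm_deriv_deriv_le
    (hy : ∀ᶠ t in atTop, DifferentiableAt ℝ y t)
    (hy' : ∀ᶠ t in atTop, DifferentiableAt ℝ (deriv y) t)
    (hyb : ∀ᶠ t in atTop, ‖deriv (deriv y) t‖ ≤ b t * ‖y t‖)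
    (hb : IntegrableAtFilter (fun t ↦ t * b t) atTop) :
    y =O[atTop] (fun t ↦ t) := by
  obtain ⟨a, hba⟩ := integrableAtFilter_atTop_iff.1 hb
  have htail : ∀ᶠ T in atTop, ∫ t in Ioi T, |t * b t| < 1 / 2 :=
    (tendsto_integral_Ioi_zero tendsto_id).eventually_lt_const (by norm_num)
  have hode_eventually := eventually_forall_ge_atTop.2 (hy.and (hy'.and hyb))
  obtain ⟨T, hode, hhalf, haT, hT⟩ := (hode_eventually.and (htail.and
    ((eventually_ge_atTop a).and (eventually_ge_atTop 1)))).exists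
  have hint : IntegrableOn (fun t ↦ |t * b t|) (Ioi T) :=
    (hba.mono_set (Ioi_subset_Ici haT)).abs
  have hderiv : ∀ S ≥ T, ‖deriv y S‖ ≤ ‖y T‖ + 2 * ‖deriv y T‖ := fun S hTS ↦ by
    refine norm_deriv_le_of_integral_abs_mul_le_half hT hTS (fun t ht ↦ (hode t ht.1).1)
      (fun t ht ↦ (hode t ht.1).2.1) (fun t ht ↦ (hode t ht.1).2.2)
      ((intervalIntegrable_iff_integrableOn_Ioc_of_le hTS).2
        (hint.mono_set Ioc_subset_Ioi_self)) ?_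
    rw [intervalIntegral.integral_of_le hTS]
    exact (setIntegral_mono_set hint (ae_of_all _ fun t ↦ abs_nonneg _)
      Ioc_subset_Ioi_self.eventuallyLE).trans hhalf.le
  refine .of_bound (‖y T‖ + (‖y T‖ + 2 * ‖deriv y T‖)) ?_
  filter_upwards [eventually_ge_atTop T] with S hTS
  rw [norm_of_nonneg (by linarith : 0 ≤ S)]
  exact norm_le_mul_of_norm_deriv_le hT (fun t ht ↦ (hode t ht.1).1)
    (fun t ht ↦ hderiv t ht.1) (right_mem_Icc.2 hTS)

end SecondOrderODE

section Concave

variable {w : ℝ → ℝ} {a : ℝ}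

lemma not_monotoneOn_of_integrableOn_exp (hint : IntegrableOn (fun t ↦ exp (w t)) (Ioi a)) :
    ¬ MonotoneOn w (Ici a) := fun hmono ↦ by
  have hconst : IntegrableOn (fun _ ↦ exp (w a)) (Ioi a) := by
    refine hint.mono' aestronglyMeasurable_const ?_
    filter_upwards [ae_restrict_mem measurableSet_Ioi] with t ht
    rw [norm_of_nonneg (exp_pos _).le]
    exact exp_le_exp.2 (hmono self_mem_Ici (Ioi_subset_Ici_self ht) (le_of_lt ht))
  simp [integrableOn_const_iff, (exp_pos _).ne'] at hconst

lemma exists_le_sub_mul_of_concaveOn (hw : ConcaveOn ℝ (Ici a) w)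
    (hmono : ¬ MonotoneOn w (Ici a)) :
    ∃ q > 0, ∃ C, ∀ᶠ t in atTop, w t ≤ C - q * t := by
  simp only [MonotoneOn, not_forall, not_le] at hmono
  obtain ⟨x, hx, z, -, hxz, hlt⟩ := hmono
  have hxz : x < z := hxz.lt_of_ne (by rintro rfl; exact hlt.false)
  set q := -((w z - w x) / (z - x)) with hq
  refine ⟨q, neg_pos.2 (div_neg_of_neg_of_pos (by linarith) (by linarith)), w z + q * z, ?_⟩
  filter_upwards [eventually_gt_atTop z] with t hzt
  have hslope : (w t - w z) / (t - z) ≤ -q := by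
    rw [hq, neg_neg]
    exact hw.slope_anti_adjacent hx (mem_Ici.1 hx |>.trans (hxz.trans hzt).le) hxz hzt
  rw [div_le_iff₀ (by linarith)] at hslope
  linarith

lemma exists_isBigO_exp_neg_of_concaveOn (hw : ConcaveOn ℝ (Ici a) w)
    (hint : IntegrableOn (fun t ↦ exp (w t)) (Ioi a)) :
    ∃ q > 0, (fun t ↦ exp (w t)) =O[atTop] fun t ↦ exp (-q * t) := by
  obtain ⟨q, hq, C, hC⟩ :=
    exists_le_sub_mul_of_concaveOn hw (not_monotoneOn_of_integrableOn_exp hint)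
  refine ⟨q, hq, .of_bound (exp C) ?_⟩
  filter_upwards [hC] with t ht
  rw [norm_of_nonneg (exp_pos _).le, norm_of_nonneg (exp_pos _).le, ← exp_add]
  exact exp_le_exp.2 (by linarith)

lemma integrableOn_mul_exp_of_concaveOn (hw : ConcaveOn ℝ univ w)
    (hint : IntegrableOn (fun t ↦ exp (w t)) (Ioi a)) :
    IntegrableOn (fun t ↦ t * exp (w t)) (Ioi a) := by
  obtain ⟨q, hq, hO⟩ :=
    exists_isBigO_exp_neg_of_concaveOn (hw.subset (subset_univ _) (convex_Ici a)) hint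
  have hcont : Continuous w := continuousOn_univ.1 (hw.continuousOn isOpen_univ)
  refine integrable_of_isBigO_exp_neg (half_pos hq) (by fun_prop) ?_
  have hid : (fun t : ℝ ↦ t) =O[atTop] fun t ↦ exp (q / 2 * t) := by
    simpa using (isLittleO_pow_exp_pos_mul_atTop 1 (half_pos hq)).isBigO
  refine (hid.mul hO).congr_right fun t ↦ ?_
  rw [← exp_add]
  ring_nf

end Concave

section LogarithmicVariable

variable {f : ℝ → ℝ}

lemma hasDerivAt_comp_exp {t : ℝ} (hf : DifferentiableAt ℝ f (exp t)) :
    HasDerivAt (fun t ↦ f (exp t)) (exp t * deriv f (exp t)) t := by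
  simpa only [mul_comm, Function.comp_def] using hf.hasDerivAt.comp t (Real.hasDerivAt_exp t)

lemma differentiableAt_deriv_of_contDiffAt_two {r : ℝ} (hf : ContDiffAt ℝ 2 f r) :
    DifferentiableAt ℝ (deriv f) r := by
  have hderiv : ContDiffAt ℝ 1 (deriv f) r := by
    simpa only [derivWithin_univ] using hf.derivWithin (m := 1) le_rfl
  exact hderiv.differentiableAt one_ne_zero

lemma hasDerivAt_exp_mul_deriv_comp_exp {t : ℝ} (hf : ContDiffAt ℝ 2 f (exp t)) :
    HasDerivAt (fun t ↦ exp t * deriv f (exp t))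
      (exp t * deriv (fun s ↦ s * deriv f s) (exp t)) t :=
  hasDerivAt_comp_exp (differentiableAt_fun_id.mul (differentiableAt_deriv_of_contDiffAt_two hf))

/-- The logarithm of the weight `r ^ b * exp (v r)` in the Emden–Fowler variable `t = log r`. The
exponent is `b + 2` because the area element `r dr` becomes `exp (2 * t) dt`. -/
noncomputable def logWeight (b : ℝ) (v : ℝ → ℝ) (t : ℝ) : ℝ :=
  (b + 2) * t + v (exp t)

lemma exp_logWeight (b : ℝ) (v : ℝ → ℝ) (t : ℝ) :
    exp (logWeight b v t) = exp t * (exp t ^ (b + 1) * exp (v (exp t))) := by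
  rw [logWeight, ← exp_mul, ← exp_add, ← exp_add]
  ring_nf

lemma integrableOn_exp_logWeight {b : ℝ} {v : ℝ → ℝ}
    (hint : IntegrableOn (fun r ↦ r ^ (b + 1) * exp (v r)) (Ioi 0)) (a : ℝ) :
    IntegrableOn (fun t ↦ exp (logWeight b v t)) (Ioi a) := by
  simp only [exp_logWeight]
  exact (integrableOn_comp_exp_Ioi _ a).2 (hint.mono_set (Ioi_subset_Ioi (exp_pos a).le))

end LogarithmicVariable

section Liouville

variable {n : ℕ} {A : Matrix (Fin n) (Fin n) ℝ} {β : Fin n → ℝ} {u φ : Fin n → ℝ → ℝ}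

lemma RadialSolution.deriv_mul_deriv_nonpos (hA : ∀ i j, 0 ≤ A i j) (hu : RadialSolution A β u)
    (i : Fin n) {r : ℝ} (hr : 0 < r) : deriv (fun s ↦ s * deriv (u i) s) r ≤ 0 := by
  have hsum : 0 ≤ ∑ j, A i j * r ^ β j * exp (u j r) :=
    Finset.sum_nonneg fun j _ ↦ by have := hA i j; positivity
  calc
    deriv (fun s ↦ s * deriv (u i) s) r = deriv (u i) r + r * deriv (deriv (u i)) r := by
      rw [deriv_fun_mul differentiableAt_fun_id
        (differentiableAt_deriv_of_contDiffAt_two (hu.1 i r hr)), deriv_id'', one_mul]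
    _ = r * (deriv (deriv (u i)) r + 1 / r * deriv (u i) r) := by field
    _ ≤ 0 := mul_nonpos_of_nonneg_of_nonpos hr.le (by linarith [hu.2.1 i r hr])

lemma RadialSolution.concaveOn_comp_exp (hA : ∀ i j, 0 ≤ A i j) (hu : RadialSolution A β u)
    (i : Fin n) : ConcaveOn ℝ univ fun t ↦ u i (exp t) := by
  have hderiv (t : ℝ) : HasDerivAt (fun t ↦ u i (exp t)) (exp t * deriv (u i) (exp t)) t :=
    hasDerivAt_comp_exp ((hu.1 i _ (exp_pos t)).differentiableAt two_ne_zero)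
  have hderiv₂ (t : ℝ) := hasDerivAt_exp_mul_deriv_comp_exp (hu.1 i _ (exp_pos t))
  refine Antitone.concaveOn_univ_of_deriv (fun t ↦ (hderiv t).differentiableAt) ?_
  rw [funext fun t ↦ (hderiv t).deriv]
  refine antitone_of_hasDerivAt_nonpos hderiv₂ fun t ↦ ?_
  exact mul_nonpos_of_nonneg_of_nonpos (exp_pos t).le (hu.deriv_mul_deriv_nonpos hA i (exp_pos t))

lemma RadialSolution.concaveOn_logWeight (hA : ∀ i j, 0 ≤ A i j) (hu : RadialSolution A β u)
    (i : Fin n) : ConcaveOn ℝ univ (logWeight (β i) (u i)) :=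
  ((LinearMap.mulLeft ℝ (β i + 2)).concaveOn convex_univ).add (hu.concaveOn_comp_exp hA i)

lemma LinearizedSolution.hasDerivAt_pi_comp_exp (hφ : LinearizedSolution A β u φ) (t : ℝ) :
    HasDerivAt (fun t i ↦ φ i (exp t)) (fun i ↦ exp t * deriv (φ i) (exp t)) t :=
  hasDerivAt_pi.2 fun i ↦
    hasDerivAt_comp_exp ((hφ.1 i _ (exp_pos t)).differentiableAt two_ne_zero)

open Matrix in
lemma LinearizedSolution.hasDerivAt_deriv_pi_comp_exp (hφ : LinearizedSolution A β u φ) (t : ℝ) :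
    HasDerivAt (deriv fun t i ↦ φ i (exp t))
      (-(A *ᵥ fun j ↦ exp (logWeight (β j) (u j) t) * φ j (exp t))) t := by
  rw [funext fun t ↦ (hφ.hasDerivAt_pi_comp_exp t).deriv, hasDerivAt_pi]
  intro i
  refine (hasDerivAt_exp_mul_deriv_comp_exp (hφ.1 i _ (exp_pos t))).congr_deriv ?_
  rw [eq_neg_of_add_eq_zero_left (hφ.2 i _ (exp_pos t)), Pi.neg_apply, mul_neg, Finset.mul_sum]
  simp only [mulVec, dotProduct, exp_logWeight]
  congr! 2 with j
  ring

open scoped Matrix.Norms.Operator in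
lemma LinearizedSolution.norm_deriv_deriv_pi_comp_exp_le (hφ : LinearizedSolution A β u φ) (t : ℝ) :
    ‖deriv (deriv fun t i ↦ φ i (exp t)) t‖
      ≤ ‖A‖ * (∑ j, exp (logWeight (β j) (u j) t)) * ‖fun i ↦ φ i (exp t)‖ := by
  rw [(hφ.hasDerivAt_deriv_pi_comp_exp t).deriv, norm_neg, mul_assoc]
  refine (Matrix.linfty_opNorm_mulVec _ _).trans ?_
  gcongr
  refine (pi_norm_le_iff_of_nonneg (by positivity)).2 fun j ↦ ?_
  rw [norm_mul, norm_of_nonneg (exp_pos _).le]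
  gcongr
  · exact Finset.single_le_sum (f := fun j ↦ exp (logWeight (β j) (u j) t))
      (fun k _ ↦ (exp_pos _).le) (Finset.mem_univ j)
  · exact norm_le_pi_norm (fun i ↦ φ i (exp t)) j

open scoped Matrix.Norms.Operator in
theorem LinearizedSolution.isBigO_log (hA : ∀ i j, 0 ≤ A i j) (hu : RadialSolution A β u)
    (hφ : LinearizedSolution A β u φ) : (fun r i ↦ φ i r) =O[atTop] log := by
  have hint : IntegrableOn (fun t ↦ t * (‖A‖ * ∑ j, exp (logWeight (β j) (u j) t))) (Ioi 0) := by
    simp only [Finset.mul_sum, mul_left_comm _ ‖A‖]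
    exact integrable_finsetSum _ fun j _ ↦ (integrableOn_mul_exp_of_concaveOn
      (hu.concaveOn_logWeight hA j) (integrableOn_exp_logWeight (hu.2.2 j) 0)).const_mul ‖A‖
  have hlinear : (fun t i ↦ φ i (exp t)) =O[atTop] fun t ↦ t :=
    isBigO_id_of_norm_deriv_deriv_le
      (.of_forall fun t ↦ (hφ.hasDerivAt_pi_comp_exp t).differentiableAt)
      (.of_forall fun t ↦ (hφ.hasDerivAt_deriv_pi_comp_exp t).differentiableAt)
      (.of_forall hφ.norm_deriv_deriv_pi_comp_exp_le) ⟨Ioi 0, Ioi_mem_atTop 0, hint⟩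
  refine (hlinear.comp_tendsto tendsto_log_atTop).congr' ?_ .rfl
  filter_upwards [eventually_gt_atTop 0] with r hr
  simp only [Function.comp_apply, exp_log hr]

theorem linearized_solutions_log_growth_general (hA : ∀ i j, 0 ≤ A i j)
    (hu : RadialSolution A β u) (hφ : LinearizedSolution A β u φ) :
    ∃ C > (0 : ℝ), ∃ R > (1 : ℝ), ∀ i, ∀ r ≥ R, |φ i r| ≤ C * log r := by
  obtain ⟨C, hC, hbound⟩ := (hφ.isBigO_log hA hu).exists_pos
  obtain ⟨R, hR⟩ := eventually_atTop.1 (hbound.bound.and (eventually_gt_atTop 1))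
  refine ⟨C, hC, R, (hR R le_rfl).2, fun i r hr ↦ ?_⟩
  obtain ⟨hle, h1r⟩ := hR r hr
  rw [norm_of_nonneg (log_pos h1r).le] at hle
  exact (norm_le_pi_norm (fun i ↦ φ i r) i).trans hle

end Liouville

theorem linearized_solutions_log_growth {n : ℕ} (hn : 0 < n)
    (A : Matrix (Fin n) (Fin n) ℝ) (β : Fin n → ℝ)
    (hA : H1 A) (hβ : ∀ i, -2 < β i)
    (u : Fin n → ℝ → ℝ) (hu : RadialSolution A β u)
    (φ : Fin n → ℝ → ℝ) (hφ : LinearizedSolution A β u φ) :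
    ∃ C > (0:ℝ), ∃ R > (1:ℝ), ∀ i, ∀ r ≥ R, |φ i r| ≤ C * Real.log r :=
  linearized_solutions_log_growth_general hA.2.1 hu hφ
end

section
/- Let A satisfy (H1) with a_{ii} > 0 for all i ∈ I, and let β_i > -2 for all i ∈ I. Then for any constants c_1,...,c_n ∈ ℝ there exists a solution u = (u_1,...,u_n) on (0,∞) of u_i''(r) + (1/r) u_i'(r) + Σ_{j∈I} a_{ij} r^{β_j} e^{u_j(r)} = 0, continuous at 0 with u_i(0) = c_i for all i ∈ I, which moreover has finite energy: ∫_0^∞ e^{u_i(r)} r^{β_i+1} dr < ∞ for all i ∈ I. -/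
open Set MeasureTheory

/-- `u` solves the radial system on (0,∞), is continuous at r = 0 (from the right)
and takes the initial values `c` there. -/
def IsIVPSolution {n : ℕ} (A : Matrix (Fin n) (Fin n) ℝ) (β : Fin n → ℝ)
    (c : Fin n → ℝ) (u : Fin n → ℝ → ℝ) : Prop :=
  (∀ i, ContinuousWithinAt (u i) (Set.Ici 0) 0) ∧
  (∀ i, u i 0 = c i) ∧
  (∀ i, ∀ r > (0:ℝ), ContDiffAt ℝ 2 (u i) r) ∧
  (∀ i, ∀ r > (0:ℝ),
    deriv (deriv (u i)) r + (1 / r) * deriv (u i) r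
      + ∑ j, A i j * r ^ β j * Real.exp (u j r) = 0)

/-!
In the variable `t = log r`, with `γ j = β j + 2`, the system becomes
`U i'' = -∑ j, A i j * exp (γ j * t + U j)` with `U → c` at `-∞`. Truncating the nonlinearity at
`U ≤ c` makes it Lipschitz in `U` with a constant `K t` that is a sum of increasing exponentials,
so that `U = c + ∫∫ f (t, U)` (primitives taken from `-∞`) is a contraction on all of `ℝ` for the
sup norm weighted by `exp (2 ∫∫ K)`. Its fixed point is concave with `U' → 0` at `-∞`, hence
`U ≤ c` and the truncation is inactive.

For the energy, `p = U i + γ i * t` is concave with `p'' ≤ -A i i * exp p`. Its slope is positive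
near `-∞` and cannot stay nonnegative, so `exp p` decays exponentially at both ends.
-/

open Filter Topology BoundedContinuousFunction

section Primitive

variable {E : Type*} [NormedAddCommGroup E] [NormedSpace ℝ E] {F G : ℝ → E}

/-- The primitive of `F` that vanishes at `-∞`. -/
noncomputable def primitiveIic (F : ℝ → E) (t : ℝ) : E := ∫ s in Iic t, F s

/-- Continuous functions for which the primitive from `-∞`, and the primitive of that primitive,
are given by convergent integrals. -/
structure TwiceIntegrableIic (F : ℝ → E) : Prop where
  continuous : Continuous F
  integrableOn (t : ℝ) : IntegrableOn F (Iic t)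
  integrableOn_primitiveIic (t : ℝ) : IntegrableOn (primitiveIic F) (Iic t)

lemma tendsto_primitiveIic_atBot (F : ℝ → E) : Tendsto (primitiveIic F) atBot (𝓝 0) :=
  tendsto_integral_Iic_zero tendsto_id

lemma primitiveIic_nonneg {K : ℝ → ℝ} (hK : ∀ t, 0 ≤ K t) (t : ℝ) : 0 ≤ primitiveIic K t :=
  integral_nonneg hK

lemma TwiceIntegrableIic.primitiveIic_primitiveIic_sub (hF : TwiceIntegrableIic F)
    (hG : TwiceIntegrableIic G) :
    primitiveIic (primitiveIic (F - G)) =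
      primitiveIic (primitiveIic F) - primitiveIic (primitiveIic G) := by
  have h : primitiveIic (F - G) = primitiveIic F - primitiveIic G :=
    funext fun t ↦ integral_sub (hF.integrableOn t) (hG.integrableOn t)
  rw [h]
  exact funext fun t ↦
    integral_sub (hF.integrableOn_primitiveIic t) (hG.integrableOn_primitiveIic t)

variable [CompleteSpace E]

lemma hasDerivAt_primitiveIic (hF : Continuous F) (hi : ∀ t, IntegrableOn F (Iic t)) (t : ℝ) :
    HasDerivAt (primitiveIic F) (F t) t := by
  have h : primitiveIic F = fun s ↦ primitiveIic F 0 + ∫ x in (0 : ℝ)..s, F x := by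
    funext s
    simp only [primitiveIic, ← intervalIntegral.integral_Iic_sub_Iic (hi 0) (hi s),
      add_sub_cancel]
  rw [h]
  exact (hF.integral_hasStrictDerivAt 0 t).hasDerivAt.const_add _

namespace TwiceIntegrableIic

lemma hasDerivAt (hF : TwiceIntegrableIic F) (t : ℝ) : HasDerivAt (primitiveIic F) (F t) t :=
  hasDerivAt_primitiveIic hF.continuous hF.integrableOn t

lemma continuous_primitiveIic (hF : TwiceIntegrableIic F) : Continuous (primitiveIic F) :=
  continuous_iff_continuousAt.2 fun t ↦ (hF.hasDerivAt t).continuousAt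

lemma hasDerivAt_primitiveIic_primitiveIic (hF : TwiceIntegrableIic F) (t : ℝ) :
    HasDerivAt (primitiveIic (primitiveIic F)) (primitiveIic F t) t :=
  hasDerivAt_primitiveIic hF.continuous_primitiveIic hF.integrableOn_primitiveIic t

lemma continuous_primitiveIic_primitiveIic (hF : TwiceIntegrableIic F) :
    Continuous (primitiveIic (primitiveIic F)) :=
  continuous_iff_continuousAt.2 fun t ↦ (hF.hasDerivAt_primitiveIic_primitiveIic t).continuousAt

end TwiceIntegrableIic

end Primitive

section Weight

variable {E : Type*} [NormedAddCommGroup E] {F : ℝ → E} {K : ℝ → ℝ} {B : ℝ}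

/-- The weight `W = exp (2 ∫∫ K)`. Since `W'' ≥ 2 K W`, multiplying by `K` and taking two primitives
has norm at most `1 / 2` for the sup norm weighted by `W`. -/
noncomputable def bieleckiWeight (K : ℝ → ℝ) (t : ℝ) : ℝ :=
  Real.exp (2 * primitiveIic (primitiveIic K) t)

lemma bieleckiWeight_pos (K : ℝ → ℝ) (t : ℝ) : 0 < bieleckiWeight K t := Real.exp_pos _

lemma one_le_bieleckiWeight (hK : ∀ t, 0 ≤ K t) (t : ℝ) : 1 ≤ bieleckiWeight K t :=
  Real.one_le_exp (mul_nonneg zero_le_two (primitiveIic_nonneg (primitiveIic_nonneg hK) t))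

lemma tendsto_bieleckiWeight_atBot (K : ℝ → ℝ) : Tendsto (bieleckiWeight K) atBot (𝓝 1) := by
  have h := ((tendsto_primitiveIic_atBot (primitiveIic K)).const_mul 2).rexp
  rwa [mul_zero, Real.exp_zero] at h

lemma hasDerivAt_bieleckiWeight (hK : TwiceIntegrableIic K) (t : ℝ) :
    HasDerivAt (bieleckiWeight K) (2 * (primitiveIic K t * bieleckiWeight K t)) t :=
  ((hK.hasDerivAt_primitiveIic_primitiveIic t).const_mul 2).exp.congr_deriv (by
    rw [bieleckiWeight]; ring)

lemma continuous_bieleckiWeight (hK : TwiceIntegrableIic K) : Continuous (bieleckiWeight K) :=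
  continuous_iff_continuousAt.2 fun t ↦ (hasDerivAt_bieleckiWeight hK t).continuousAt

lemma monotone_bieleckiWeight (hK : TwiceIntegrableIic K) (hK0 : ∀ t, 0 ≤ K t) :
    Monotone (bieleckiWeight K) :=
  monotone_of_hasDerivAt_nonneg (hasDerivAt_bieleckiWeight hK) fun t ↦
    mul_nonneg zero_le_two
      (mul_nonneg (primitiveIic_nonneg hK0 t) (bieleckiWeight_pos K t).le)

lemma integrableOn_mul_bieleckiWeight {L : ℝ → ℝ} (hK : TwiceIntegrableIic K)
    (hK0 : ∀ t, 0 ≤ K t) (hL : Continuous L) {t : ℝ} (hLi : IntegrableOn L (Iic t)) :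
    IntegrableOn (fun s ↦ L s * bieleckiWeight K s) (Iic t) := by
  refine (hLi.norm.mul_const (bieleckiWeight K t)).mono'
    (hL.mul (continuous_bieleckiWeight hK)).aestronglyMeasurable ?_
  filter_upwards [ae_restrict_mem measurableSet_Iic] with s hs
  rw [norm_mul, Real.norm_of_nonneg (bieleckiWeight_pos K s).le]
  gcongr
  exact monotone_bieleckiWeight hK hK0 hs

lemma primitiveIic_mul_bieleckiWeight_le (hK : TwiceIntegrableIic K) (hK0 : ∀ t, 0 ≤ K t)
    (t : ℝ) :
    primitiveIic (fun s ↦ K s * bieleckiWeight K s) t ≤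
      primitiveIic K t * bieleckiWeight K t := by
  rw [primitiveIic, primitiveIic, ← integral_mul_const]
  refine setIntegral_mono_on
    (integrableOn_mul_bieleckiWeight hK hK0 hK.continuous (hK.integrableOn t))
    ((hK.integrableOn t).mul_const _) measurableSet_Iic fun s hs ↦ ?_
  exact mul_le_mul_of_nonneg_left (monotone_bieleckiWeight hK hK0 hs) (hK0 s)

lemma primitiveIic_primitiveIic_mul_bieleckiWeight (hK : TwiceIntegrableIic K)
    (hK0 : ∀ t, 0 ≤ K t) (t : ℝ) :
    primitiveIic (fun s ↦ primitiveIic K s * bieleckiWeight K s) t =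
      (bieleckiWeight K t - 1) / 2 := by
  have hi := integrableOn_mul_bieleckiWeight hK hK0 hK.continuous_primitiveIic
    (hK.integrableOn_primitiveIic t)
  have h := integral_Iic_of_hasDerivAt_of_tendsto' (fun s _ ↦ hasDerivAt_bieleckiWeight hK s)
    (hi.const_mul 2) (tendsto_bieleckiWeight_atBot K)
  rw [integral_const_mul] at h
  rw [primitiveIic]
  linarith

lemma integrableOn_Iic_of_norm_le_mul_bieleckiWeight (hK : TwiceIntegrableIic K)
    (hK0 : ∀ t, 0 ≤ K t) (hF : Continuous F)
    (hFK : ∀ s, ‖F s‖ ≤ B * (K s * bieleckiWeight K s)) (t : ℝ) : IntegrableOn F (Iic t) :=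
  ((integrableOn_mul_bieleckiWeight hK hK0 hK.continuous (hK.integrableOn t)).const_mul B).mono'
    hF.aestronglyMeasurable (ae_of_all _ hFK)

variable [NormedSpace ℝ E]

lemma norm_primitiveIic_le (hK : TwiceIntegrableIic K) (hK0 : ∀ t, 0 ≤ K t) (hB : 0 ≤ B)
    (hFK : ∀ s, ‖F s‖ ≤ B * (K s * bieleckiWeight K s)) (t : ℝ) :
    ‖primitiveIic F t‖ ≤ B * (primitiveIic K t * bieleckiWeight K t) := by
  have hi := integrableOn_mul_bieleckiWeight hK hK0 hK.continuous (hK.integrableOn t)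
  calc ‖primitiveIic F t‖
      ≤ ∫ s in Iic t, B * (K s * bieleckiWeight K s) :=
        norm_integral_le_of_norm_le (hi.const_mul B) (ae_of_all _ hFK)
    _ = B * primitiveIic (fun s ↦ K s * bieleckiWeight K s) t := integral_const_mul _ _
    _ ≤ B * (primitiveIic K t * bieleckiWeight K t) :=
        mul_le_mul_of_nonneg_left (primitiveIic_mul_bieleckiWeight_le hK hK0 t) hB

lemma norm_inv_bieleckiWeight_smul_primitiveIic_primitiveIic_le (hK : TwiceIntegrableIic K)
    (hK0 : ∀ t, 0 ≤ K t) (hB : 0 ≤ B)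
    (hFK : ∀ s, ‖F s‖ ≤ B * (K s * bieleckiWeight K s)) (t : ℝ) :
    ‖(bieleckiWeight K t)⁻¹ • primitiveIic (primitiveIic F) t‖ ≤ B / 2 := by
  have hW := bieleckiWeight_pos K t
  have hi := integrableOn_mul_bieleckiWeight hK hK0 hK.continuous_primitiveIic
    (hK.integrableOn_primitiveIic t)
  rw [norm_smul, norm_inv, Real.norm_of_nonneg hW.le, inv_mul_le_iff₀ hW]
  calc ‖primitiveIic (primitiveIic F) t‖
      ≤ ∫ s in Iic t, B * (primitiveIic K s * bieleckiWeight K s) :=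
        norm_integral_le_of_norm_le (hi.const_mul B)
          (ae_of_all _ (norm_primitiveIic_le hK hK0 hB hFK))
    _ = B * primitiveIic (fun s ↦ primitiveIic K s * bieleckiWeight K s) t :=
        integral_const_mul _ _
    _ = bieleckiWeight K t * (B / 2) - B / 2 := by
        rw [primitiveIic_primitiveIic_mul_bieleckiWeight hK hK0]; ring
    _ ≤ bieleckiWeight K t * (B / 2) := sub_le_self _ (by positivity)

lemma TwiceIntegrableIic.of_norm_le_mul_bieleckiWeight [CompleteSpace E]
    (hK : TwiceIntegrableIic K) (hK0 : ∀ t, 0 ≤ K t) (hB : 0 ≤ B) (hF : Continuous F)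
    (hFK : ∀ s, ‖F s‖ ≤ B * (K s * bieleckiWeight K s)) : TwiceIntegrableIic F where
  continuous := hF
  integrableOn := integrableOn_Iic_of_norm_le_mul_bieleckiWeight hK hK0 hF hFK
  integrableOn_primitiveIic t := by
    have hi := integrableOn_Iic_of_norm_le_mul_bieleckiWeight hK hK0 hF hFK
    have hJF : Continuous (primitiveIic F) :=
      continuous_iff_continuousAt.2 fun s ↦ (hasDerivAt_primitiveIic hF hi s).continuousAt
    exact ((integrableOn_mul_bieleckiWeight hK hK0 hK.continuous_primitiveIic
      (hK.integrableOn_primitiveIic t)).const_mul B).mono' hJF.aestronglyMeasurable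
      (ae_of_all _ (norm_primitiveIic_le hK hK0 hB hFK))

end Weight

section SecondOrderODE

variable {E : Type*} [NormedAddCommGroup E] [NormedSpace ℝ E]

/-- `U` solves `U'' = f (t, U)` on `ℝ` with derivative `V = U'`, and `U → c`, `U' → 0` at `-∞`. -/
structure IsSolutionFromBot (f : ℝ → E → E) (c : E) (U V : ℝ → E) : Prop where
  hasDerivAt (t : ℝ) : HasDerivAt U (V t) t
  hasDerivAt_deriv (t : ℝ) : HasDerivAt V (f t (U t)) t
  tendsto : Tendsto U atBot (𝓝 c)
  tendsto_deriv : Tendsto V atBot (𝓝 0)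

variable {f : ℝ → E → E} {K : ℝ → ℝ} {c : E}

lemma isSolutionFromBot_of_eq_add_primitiveIic [CompleteSpace E] {U : ℝ → E}
    (hF : TwiceIntegrableIic fun s ↦ f s (U s))
    (hU : ∀ t, U t = c + primitiveIic (primitiveIic fun s ↦ f s (U s)) t) :
    IsSolutionFromBot f c U (primitiveIic fun s ↦ f s (U s)) where
  hasDerivAt t := by
    have h := (hF.hasDerivAt_primitiveIic_primitiveIic t).const_add c
    rwa [← funext hU] at h
  hasDerivAt_deriv := hF.hasDerivAt
  tendsto := by
    have h := (tendsto_primitiveIic_atBot (primitiveIic fun s ↦ f s (U s))).const_add c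
    rwa [← funext hU, add_zero] at h
  tendsto_deriv := tendsto_primitiveIic_atBot _

/-- `f (s, U s)` for `U = c + W w`, where `w` is the unknown rescaled by the weight `W`. -/
noncomputable def rescaledField (f : ℝ → E → E) (K : ℝ → ℝ) (c : E) (w : ℝ →ᵇ E) (s : ℝ) : E :=
  f s (c + bieleckiWeight K s • w s)

lemma continuous_rescaledField (hK : TwiceIntegrableIic K)
    (hf : Continuous (Function.uncurry f)) (w : ℝ →ᵇ E) : Continuous (rescaledField f K c w) :=
  hf.comp (continuous_id.prodMk
    (continuous_const.add ((continuous_bieleckiWeight hK).smul w.continuous)))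

lemma norm_rescaledField_sub_le (hK0 : ∀ t, 0 ≤ K t)
    (hfK : ∀ t x y, ‖f t x - f t y‖ ≤ K t * ‖x - y‖) (v w : ℝ →ᵇ E) (s : ℝ) :
    ‖rescaledField f K c v s - rescaledField f K c w s‖ ≤
      dist v w * (K s * bieleckiWeight K s) := by
  have hvw : ‖v s - w s‖ ≤ dist v w := dist_eq_norm (v s) (w s) ▸ dist_coe_le_dist s
  calc ‖rescaledField f K c v s - rescaledField f K c w s‖
      ≤ K s * (bieleckiWeight K s * ‖v s - w s‖) := by
        refine (hfK s _ _).trans_eq ?_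
        rw [add_sub_add_left_eq_sub, ← smul_sub, norm_smul,
          Real.norm_of_nonneg (bieleckiWeight_pos K s).le]
    _ ≤ K s * (bieleckiWeight K s * dist v w) :=
        mul_le_mul_of_nonneg_left
          (mul_le_mul_of_nonneg_left hvw (bieleckiWeight_pos K s).le) (hK0 s)
    _ = dist v w * (K s * bieleckiWeight K s) := by ring

lemma norm_rescaledField_le (hfc : ∀ t, ‖f t c‖ ≤ K t)
    (hfK : ∀ t x y, ‖f t x - f t y‖ ≤ K t * ‖x - y‖) (w : ℝ →ᵇ E) (s : ℝ) :
    ‖rescaledField f K c w s‖ ≤ (‖w‖ + 1) * (K s * bieleckiWeight K s) := by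
  have hK0 : ∀ t, 0 ≤ K t := fun t ↦ (norm_nonneg _).trans (hfc t)
  have h0 : rescaledField f K c 0 s = f s c := by simp [rescaledField]
  have hdist := norm_rescaledField_sub_le (c := c) hK0 hfK w 0 s
  rw [h0, dist_zero_right] at hdist
  have hKW : K s ≤ K s * bieleckiWeight K s :=
    le_mul_of_one_le_right (hK0 s) (one_le_bieleckiWeight hK0 s)
  linarith [norm_le_norm_sub_add (rescaledField f K c w s) (f s c), hfc s]

variable [CompleteSpace E]

lemma twiceIntegrableIic_rescaledField (hK : TwiceIntegrableIic K)
    (hf : Continuous (Function.uncurry f)) (hfc : ∀ t, ‖f t c‖ ≤ K t)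
    (hfK : ∀ t x y, ‖f t x - f t y‖ ≤ K t * ‖x - y‖) (w : ℝ →ᵇ E) :
    TwiceIntegrableIic (rescaledField f K c w) :=
  .of_norm_le_mul_bieleckiWeight hK (fun t ↦ (norm_nonneg _).trans (hfc t)) (by positivity)
    (continuous_rescaledField hK hf w) (norm_rescaledField_le hfc hfK w)

/-- The Picard map `U ↦ c + ∫∫ f (s, U s)`, written for the rescaled unknown `w = (U - c) / W`. -/
noncomputable def rescaledPicard (hK : TwiceIntegrableIic K)
    (hf : Continuous (Function.uncurry f)) (hfc : ∀ t, ‖f t c‖ ≤ K t)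
    (hfK : ∀ t x y, ‖f t x - f t y‖ ≤ K t * ‖x - y‖) (w : ℝ →ᵇ E) : ℝ →ᵇ E :=
  .ofNormedAddCommGroup
    (fun t ↦ (bieleckiWeight K t)⁻¹ • primitiveIic (primitiveIic (rescaledField f K c w)) t)
    (((continuous_bieleckiWeight hK).inv₀ fun t ↦ (bieleckiWeight_pos K t).ne').smul
      (twiceIntegrableIic_rescaledField hK hf hfc hfK w).continuous_primitiveIic_primitiveIic)
    ((‖w‖ + 1) / 2)
    (norm_inv_bieleckiWeight_smul_primitiveIic_primitiveIic_le hK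
      (fun t ↦ (norm_nonneg _).trans (hfc t)) (by positivity) (norm_rescaledField_le hfc hfK w))

lemma contractingWith_rescaledPicard (hK : TwiceIntegrableIic K)
    (hf : Continuous (Function.uncurry f)) (hfc : ∀ t, ‖f t c‖ ≤ K t)
    (hfK : ∀ t x y, ‖f t x - f t y‖ ≤ K t * ‖x - y‖) :
    ContractingWith 2⁻¹ (rescaledPicard hK hf hfc hfK) := by
  have hK0 : ∀ t, 0 ≤ K t := fun t ↦ (norm_nonneg _).trans (hfc t)
  refine ⟨two_inv_lt_one, LipschitzWith.of_dist_le_mul fun v w ↦ ?_⟩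
  refine (dist_le (by positivity)).2 fun t ↦ ?_
  have hsub := (twiceIntegrableIic_rescaledField hK hf hfc hfK v).primitiveIic_primitiveIic_sub
    (twiceIntegrableIic_rescaledField hK hf hfc hfK w)
  calc dist (rescaledPicard hK hf hfc hfK v t) (rescaledPicard hK hf hfc hfK w t)
      = ‖(bieleckiWeight K t)⁻¹ •
          primitiveIic (primitiveIic (rescaledField f K c v - rescaledField f K c w)) t‖ := by
        rw [hsub, Pi.sub_apply, smul_sub, dist_eq_norm]
        rfl
    _ ≤ dist v w / 2 := norm_inv_bieleckiWeight_smul_primitiveIic_primitiveIic_le hK hK0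
        dist_nonneg (norm_rescaledField_sub_le hK0 hfK v w) t
    _ = (2⁻¹ : NNReal) * dist v w := by push_cast; ring

theorem exists_isSolutionFromBot (hK : TwiceIntegrableIic K)
    (hf : Continuous (Function.uncurry f)) (hfc : ∀ t, ‖f t c‖ ≤ K t)
    (hfK : ∀ t x y, ‖f t x - f t y‖ ≤ K t * ‖x - y‖) :
    ∃ U V : ℝ → E, IsSolutionFromBot f c U V := by
  obtain ⟨w, hw⟩ : ∃ w, rescaledPicard hK hf hfc hfK w = w :=
    ⟨_, (contractingWith_rescaledPicard hK hf hfc hfK).fixedPoint_isFixedPt⟩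
  have hwt (t : ℝ) : bieleckiWeight K t • w t =
      primitiveIic (primitiveIic (rescaledField f K c w)) t := by
    rw [← smul_inv_smul₀ (bieleckiWeight_pos K t).ne'
      (primitiveIic (primitiveIic (rescaledField f K c w)) t)]
    exact congrArg (bieleckiWeight K t • · t) hw.symm
  exact ⟨_, _, isSolutionFromBot_of_eq_add_primitiveIic (U := fun t ↦ c + bieleckiWeight K t • w t)
    (twiceIntegrableIic_rescaledField hK hf hfc hfK w) fun t ↦ congrArg (c + ·) (hwt t)⟩

end SecondOrderODE

section Liouville

variable {ι : Type*} [Fintype ι] {A : Matrix ι ι ℝ} {γ c : ι → ℝ} {U V : ℝ → ι → ℝ}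

lemma twiceIntegrableIic_sum_mul_exp (k : ι → ℝ) (hγ : ∀ j, 0 < γ j) :
    TwiceIntegrableIic fun t ↦ ∑ j, k j * Real.exp (γ j * t) := by
  have hint (l : ι → ℝ) (t : ℝ) :
      IntegrableOn (fun s ↦ ∑ j, l j * Real.exp (γ j * s)) (Iic t) :=
    integrable_finsetSum _ fun j _ ↦ (integrableOn_exp_mul_Iic (hγ j) t).const_mul (l j)
  have hprim : primitiveIic (fun t ↦ ∑ j, k j * Real.exp (γ j * t)) =
      fun t ↦ ∑ j, k j / γ j * Real.exp (γ j * t) := by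
    funext t
    rw [primitiveIic,
      integral_finsetSum _ fun j _ ↦ (integrableOn_exp_mul_Iic (hγ j) t).const_mul (k j)]
    simp only [integral_const_mul, integral_exp_mul_Iic (hγ _), mul_div_assoc', div_mul_eq_mul_div]
  exact ⟨by fun_prop, hint k, hprim ▸ hint _⟩

lemma abs_exp_min_sub_exp_min_le (x y c : ℝ) :
    |Real.exp (min x c) - Real.exp (min y c)| ≤ Real.exp c * |x - y| := by
  have hmin : |min x c - min y c| ≤ |x - y| := by
    simpa using abs_min_sub_min_le_max x c y c
  calc |Real.exp (min x c) - Real.exp (min y c)|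
      ≤ Real.exp c * |min x c - min y c| :=
        (convex_Iic c).norm_image_sub_le_of_norm_deriv_le
          (fun z _ ↦ Real.differentiableAt_exp)
          (fun z hz ↦ by simpa using hz) (min_le_right y c) (min_le_right x c)
    _ ≤ Real.exp c * |x - y| := mul_le_mul_of_nonneg_left hmin (Real.exp_pos c).le

/-- The right-hand side of the system in the variable `t = log r`, where `γ j = β j + 2`. -/
noncomputable def liouvilleField (A : Matrix ι ι ℝ) (γ : ι → ℝ) (t : ℝ) (x : ι → ℝ) : ι → ℝ :=
  fun i ↦ -∑ j, A i j * Real.exp (γ j * t + x j)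

lemma continuous_liouvilleField (A : Matrix ι ι ℝ) (γ : ι → ℝ) :
    Continuous (Function.uncurry (liouvilleField A γ)) := by
  unfold liouvilleField Function.uncurry
  fun_prop

lemma liouvilleField_nonpos (hA : ∀ i j, 0 ≤ A i j) (t : ℝ) (x : ι → ℝ) :
    liouvilleField A γ t x ≤ 0 := fun i ↦
  neg_nonpos.2 (Finset.sum_nonneg fun j _ ↦ mul_nonneg (hA i j) (Real.exp_pos _).le)

/-- A common bound for the size and the Lipschitz constant of `liouvilleField` on `x ≤ c`. -/
noncomputable def liouvilleBound (A : Matrix ι ι ℝ) (γ c : ι → ℝ) (t : ℝ) : ℝ :=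
  ∑ j, ((∑ i, A i j) * Real.exp (c j)) * Real.exp (γ j * t)

lemma twiceIntegrableIic_liouvilleBound (A : Matrix ι ι ℝ) (hγ : ∀ j, 0 < γ j) (c : ι → ℝ) :
    TwiceIntegrableIic (liouvilleBound A γ c) :=
  twiceIntegrableIic_sum_mul_exp _ hγ

lemma sum_mul_exp_le_liouvilleBound (hA : ∀ i j, 0 ≤ A i j) (γ c : ι → ℝ) (t : ℝ) (i : ι) :
    ∑ j, A i j * Real.exp (γ j * t + c j) ≤ liouvilleBound A γ c t := by
  refine Finset.sum_le_sum fun j _ ↦ ?_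
  rw [add_comm, Real.exp_add, ← mul_assoc]
  gcongr
  exact Finset.single_le_sum (f := fun i ↦ A i j) (fun i _ ↦ hA i j) (Finset.mem_univ i)

lemma liouvilleBound_nonneg (hA : ∀ i j, 0 ≤ A i j) (γ c : ι → ℝ) (t : ℝ) :
    0 ≤ liouvilleBound A γ c t :=
  Finset.sum_nonneg fun j _ ↦ mul_nonneg
    (mul_nonneg (Finset.sum_nonneg fun i _ ↦ hA i j) (Real.exp_pos _).le) (Real.exp_pos _).le

lemma norm_liouvilleField_le (hA : ∀ i j, 0 ≤ A i j) (γ c : ι → ℝ) (t : ℝ) :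
    ‖liouvilleField A γ t c‖ ≤ liouvilleBound A γ c t := by
  refine (pi_norm_le_iff_of_nonneg (liouvilleBound_nonneg hA γ c t)).2 fun i ↦ ?_
  rw [Real.norm_of_nonpos (liouvilleField_nonpos hA t c i), liouvilleField, neg_neg]
  exact sum_mul_exp_le_liouvilleBound hA γ c t i

lemma norm_liouvilleField_inf_sub_le (hA : ∀ i j, 0 ≤ A i j) (γ c : ι → ℝ) (t : ℝ)
    (x y : ι → ℝ) :
    ‖liouvilleField A γ t (x ⊓ c) - liouvilleField A γ t (y ⊓ c)‖ ≤
      liouvilleBound A γ c t * ‖x - y‖ := by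
  have hterm (i j : ι) :
      |A i j * Real.exp (γ j * t + min (y j) (c j)) -
        A i j * Real.exp (γ j * t + min (x j) (c j))| ≤
      A i j * Real.exp (γ j * t + c j) * ‖x - y‖ := by
    rw [Real.exp_add, Real.exp_add, Real.exp_add, ← mul_sub, ← mul_sub, abs_mul, abs_mul,
      abs_of_nonneg (hA i j), Real.abs_exp, mul_assoc, mul_assoc, norm_sub_rev]
    refine mul_le_mul_of_nonneg_left (mul_le_mul_of_nonneg_left ?_ (Real.exp_pos _).le) (hA i j)
    exact (abs_exp_min_sub_exp_min_le _ _ _).trans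
      (mul_le_mul_of_nonneg_left (norm_le_pi_norm (y - x) j) (Real.exp_pos _).le)
  refine (pi_norm_le_iff_of_nonneg
    (mul_nonneg (liouvilleBound_nonneg hA γ c t) (norm_nonneg _))).2 fun i ↦ ?_
  calc ‖liouvilleField A γ t (x ⊓ c) i - liouvilleField A γ t (y ⊓ c) i‖
      = |∑ j, (A i j * Real.exp (γ j * t + min (y j) (c j)) -
          A i j * Real.exp (γ j * t + min (x j) (c j)))| := by
        rw [liouvilleField, liouvilleField, neg_sub_neg, ← Finset.sum_sub_distrib]
        rfl
    _ ≤ ∑ j, A i j * Real.exp (γ j * t + c j) * ‖x - y‖ :=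
        (Finset.abs_sum_le_sum_abs _ _).trans (Finset.sum_le_sum fun j _ ↦ hterm i j)
    _ ≤ liouvilleBound A γ c t * ‖x - y‖ := by
        rw [← Finset.sum_mul]
        gcongr
        exact sum_mul_exp_le_liouvilleBound hA γ c t i

lemma IsSolutionFromBot.apply_le {f : ℝ → (ι → ℝ) → ι → ℝ} (h : IsSolutionFromBot f c U V)
    (hf : ∀ t x, f t x ≤ 0) (t : ℝ) : U t ≤ c := by
  intro i
  have hV : Antitone fun t ↦ V t i :=
    antitone_of_hasDerivAt_nonpos (fun t ↦ hasDerivAt_pi.1 (h.hasDerivAt_deriv t) i)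
      fun t ↦ hf t (U t) i
  have hU : Antitone fun t ↦ U t i :=
    antitone_of_hasDerivAt_nonpos (fun t ↦ hasDerivAt_pi.1 (h.hasDerivAt t) i)
      fun t ↦ hV.ge_of_tendsto (tendsto_pi_nhds.1 h.tendsto_deriv i) t
  exact hU.ge_of_tendsto (tendsto_pi_nhds.1 h.tendsto i) t

theorem exists_isSolutionFromBot_liouvilleField (hA : ∀ i j, 0 ≤ A i j) (hγ : ∀ j, 0 < γ j)
    (c : ι → ℝ) : ∃ U V : ℝ → ι → ℝ, IsSolutionFromBot (liouvilleField A γ) c U V := by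
  have hinf : Continuous fun p : ℝ × (ι → ℝ) ↦ p.2 ⊓ c :=
    continuous_pi fun j ↦ ((continuous_apply j).comp continuous_snd).min continuous_const
  obtain ⟨U, V, h⟩ := exists_isSolutionFromBot (f := fun t x ↦ liouvilleField A γ t (x ⊓ c))
    (c := c) (twiceIntegrableIic_liouvilleBound A hγ c)
    ((continuous_liouvilleField A γ).comp (continuous_fst.prodMk hinf))
    (fun t ↦ by simpa only [inf_idem] using norm_liouvilleField_le hA γ c t)
    (norm_liouvilleField_inf_sub_le hA γ c)
  have hUc (t : ℝ) : U t ⊓ c = U t :=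
    inf_eq_left.2 (h.apply_le (fun t x ↦ liouvilleField_nonpos hA t (x ⊓ c)) t)
  exact ⟨U, V, h.hasDerivAt, fun t ↦ hUc t ▸ h.hasDerivAt_deriv t, h.tendsto, h.tendsto_deriv⟩

end Liouville

section Energy

variable {p q q' : ℝ → ℝ} {a b s m : ℝ}

lemma le_tangent_of_concaveOn (hp : ConcaveOn ℝ univ p) (hm : HasDerivAt p m s) (t : ℝ) :
    p t ≤ p s + m * (t - s) := by
  rcases lt_trichotomy s t with hst | rfl | hts
  · have h := hp.slope_le_of_hasDerivAt (mem_univ s) (mem_univ t) hst hm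
    rw [slope_def_field, div_le_iff₀ (sub_pos.2 hst)] at h
    linarith
  · simp
  · have h := hp.le_slope_of_hasDerivAt (mem_univ t) (mem_univ s) hts hm
    rw [slope_def_field, le_div_iff₀ (sub_pos.2 hts)] at h
    linarith

lemma integrable_exp_of_concaveOn (hp : ConcaveOn ℝ univ p) (ha : HasDerivAt p m a) (hm : 0 < m)
    {m' : ℝ} (hb : HasDerivAt p m' b) (hm' : m' < 0) : Integrable fun t ↦ Real.exp (p t) := by
  have hcont : Continuous p := by
    rw [← continuousOn_univ]
    exact hp.continuousOn isOpen_univ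
  have hle {s l : ℝ} (hl : HasDerivAt p l s) (t : ℝ) :
      ‖Real.exp (p t)‖ ≤ Real.exp (p s - l * s) * Real.exp (l * t) := by
    rw [Real.norm_of_nonneg (Real.exp_pos _).le, ← Real.exp_add]
    exact Real.exp_le_exp.2 ((le_tangent_of_concaveOn hp hl t).trans_eq (by ring))
  have hmeas {S : Set ℝ} : AEStronglyMeasurable (fun t ↦ Real.exp (p t)) (volume.restrict S) :=
    hcont.rexp.aestronglyMeasurable
  rw [← integrableOn_univ, ← Iic_union_Ioi (a := (0 : ℝ))]
  exact .union
    (((integrableOn_exp_mul_Iic hm 0).const_mul _).mono' hmeas (ae_of_all _ (hle ha)))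
    (((integrableOn_exp_mul_Ioi hm' 0).const_mul _).mono' hmeas (ae_of_all _ (hle hb)))

lemma exists_deriv_neg_of_deriv2_le_neg_exp (hp : ∀ t, HasDerivAt p (q t) t)
    (hq : ∀ t, HasDerivAt q (q' t) t) (ha : 0 < a) (hq' : ∀ t, q' t ≤ -(a * Real.exp (p t))) :
    ∃ t, q t < 0 := by
  by_contra! hq0
  have hmono : Monotone p := monotone_of_hasDerivAt_nonneg hp hq0
  set δ := a * Real.exp (p 0)
  have hδ : 0 < δ := mul_pos ha (Real.exp_pos _)
  have hlin (t : ℝ) (ht : 0 ≤ t) : q t - q 0 ≤ -δ * (t - 0) := by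
    refine (convex_Ici 0).image_sub_le_mul_sub_of_deriv_le
      (fun s _ ↦ (hq s).continuousAt.continuousWithinAt)
      (fun s _ ↦ (hq s).differentiableAt.differentiableWithinAt) (fun s hs ↦ ?_)
      0 self_mem_Ici t ht ht
    rw [(hq s).deriv]
    exact (hq' s).trans (neg_le_neg (mul_le_mul_of_nonneg_left
      (Real.exp_le_exp.2 (hmono (interior_subset hs))) ha.le))
  have h := hlin ((q 0 + 1) / δ) (div_nonneg (by linarith [hq0 0]) hδ.le)
  rw [sub_zero, neg_mul, mul_div_cancel₀ _ hδ.ne'] at h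
  linarith [hq0 ((q 0 + 1) / δ)]

lemma integrable_exp_of_deriv2_le_neg_exp (hp : ∀ t, HasDerivAt p (q t) t)
    (hq : ∀ t, HasDerivAt q (q' t) t) (ha : 0 < a) (hq' : ∀ t, q' t ≤ -(a * Real.exp (p t)))
    (hs : 0 < q s) : Integrable fun t ↦ Real.exp (p t) := by
  obtain ⟨b, hb⟩ := exists_deriv_neg_of_deriv2_le_neg_exp hp hq ha hq'
  have hanti : Antitone q := antitone_of_hasDerivAt_nonpos hq fun t ↦
    (hq' t).trans (neg_nonpos.2 (mul_nonneg ha.le (Real.exp_pos _).le))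
  have hconc : ConcaveOn ℝ univ p :=
    Antitone.concaveOn_univ_of_deriv (fun t ↦ (hp t).differentiableAt)
      (by rwa [funext fun t ↦ (hp t).deriv])
  exact integrable_exp_of_concaveOn hconc (hp s) hs (hp b) hb

variable {ι : Type*} [Fintype ι] {A : Matrix ι ι ℝ} {γ c : ι → ℝ} {U V : ℝ → ι → ℝ}

theorem IsSolutionFromBot.integrable_exp (h : IsSolutionFromBot (liouvilleField A γ) c U V)
    (hA : ∀ i j, 0 ≤ A i j) {i : ι} (hAi : 0 < A i i) (hγ : 0 < γ i) :
    Integrable fun t ↦ Real.exp (γ i * t + U t i) := by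
  have hp (t : ℝ) : HasDerivAt (fun t ↦ γ i * t + U t i) (γ i + V t i) t := by
    simpa using ((hasDerivAt_id t).const_mul (γ i)).fun_add (hasDerivAt_pi.1 (h.hasDerivAt t) i)
  have hq (t : ℝ) : HasDerivAt (fun t ↦ γ i + V t i) (liouvilleField A γ t (U t) i) t :=
    (hasDerivAt_pi.1 (h.hasDerivAt_deriv t) i).const_add (γ i)
  have hself (t : ℝ) : liouvilleField A γ t (U t) i ≤ -(A i i * Real.exp (γ i * t + U t i)) :=
    neg_le_neg (Finset.single_le_sum (f := fun j ↦ A i j * Real.exp (γ j * t + U t j))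
      (fun j _ ↦ mul_nonneg (hA i j) (Real.exp_pos _).le) (Finset.mem_univ i))
  have hlim : Tendsto (fun t ↦ γ i + V t i) atBot (𝓝 (γ i)) := by
    simpa using (tendsto_pi_nhds.1 h.tendsto_deriv i).const_add (γ i)
  obtain ⟨s, hs⟩ := (hlim.eventually_const_lt hγ).exists
  exact integrable_exp_of_deriv2_le_neg_exp hp hq hAi hself hs

end Energy

section Radial

variable {U V V' : ℝ → ℝ} {c r : ℝ}

/-- The radial function `r ↦ U (log r)` on `(0, ∞)`, with the value `c` at `r = 0`. For `r < 0` the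
value is the junk `U (log |r|)`. -/
noncomputable def radialExtension (U : ℝ → ℝ) (c : ℝ) : ℝ → ℝ :=
  Function.update (fun r ↦ U (Real.log r)) 0 c

lemma radialExtension_zero (U : ℝ → ℝ) (c : ℝ) : radialExtension U c 0 = c :=
  Function.update_self _ _ _

lemma radialExtension_of_ne_zero (U : ℝ → ℝ) (c : ℝ) (hr : r ≠ 0) :
    radialExtension U c r = U (Real.log r) :=
  Function.update_of_ne hr _ _

lemma radialExtension_eventuallyEq (U : ℝ → ℝ) (c : ℝ) (hr : r ≠ 0) :
    radialExtension U c =ᶠ[𝓝 r] fun s ↦ U (Real.log s) := by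
  filter_upwards [eventually_ne_nhds hr] with s hs using radialExtension_of_ne_zero U c hs

lemma continuousWithinAt_radialExtension (hU : Tendsto U atBot (𝓝 c)) :
    ContinuousWithinAt (radialExtension U c) (Ici 0) 0 := by
  rw [radialExtension, continuousWithinAt_update_same, Ici_sdiff_left]
  exact hU.comp Real.tendsto_log_nhdsGT_zero

lemma contDiffAt_radialExtension {n : WithTop ℕ∞} (hU : ContDiff ℝ n U) (hr : r ≠ 0) :
    ContDiffAt ℝ n (radialExtension U c) r :=
  (hU.contDiffAt.comp r (Real.contDiffAt_log.2 hr)).congr_of_eventuallyEq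
    (radialExtension_eventuallyEq U c hr)

lemma hasDerivAt_radialExtension (hU : ∀ t, HasDerivAt U (V t) t) (hr : r ≠ 0) :
    HasDerivAt (radialExtension U c) (V (Real.log r) * r⁻¹) r :=
  ((hU _).comp r (Real.hasDerivAt_log hr)).congr_of_eventuallyEq
    (radialExtension_eventuallyEq U c hr)

lemma deriv_deriv_radialExtension_add (hU : ∀ t, HasDerivAt U (V t) t)
    (hV : ∀ t, HasDerivAt V (V' t) t) (hr : r ≠ 0) :
    deriv (deriv (radialExtension U c)) r + 1 / r * deriv (radialExtension U c) r =
      V' (Real.log r) / r ^ 2 := by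
  have hderiv : deriv (radialExtension U c) =ᶠ[𝓝 r] fun s ↦ V (Real.log s) * s⁻¹ := by
    filter_upwards [eventually_ne_nhds hr] with s hs using (hasDerivAt_radialExtension hU hs).deriv
  have hderiv2 := ((hV _).comp r (Real.hasDerivAt_log hr)).mul (hasDerivAt_inv hr)
  rw [hderiv.deriv_eq.trans hderiv2.deriv, hderiv.eq_of_nhds, Function.comp_apply]
  field_simp
  ring

lemma exp_add_two_mul_log_add (b x : ℝ) (hr : 0 < r) :
    Real.exp ((b + 2) * Real.log r + x) = r ^ 2 * (r ^ b * Real.exp x) := by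
  rw [Real.exp_add, mul_comm (b + 2), ← Real.rpow_def_of_pos hr, Real.rpow_add hr, Real.rpow_two]
  ring

lemma integrableOn_exp_radialExtension_mul_rpow_iff (U : ℝ → ℝ) (c b : ℝ) :
    IntegrableOn (fun r ↦ Real.exp (radialExtension U c r) * r ^ (b + 1)) (Ioi 0) ↔
      Integrable fun t ↦ Real.exp ((b + 2) * t + U t) := by
  rw [← Real.range_exp, ← image_univ, integrableOn_image_iff_integrableOn_abs_deriv_smul
    MeasurableSet.univ (fun t _ ↦ (Real.hasDerivAt_exp t).hasDerivWithinAt)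
    Real.exp_injective.injOn, integrableOn_univ]
  refine iff_of_eq (congrArg (Integrable · volume) (funext fun t ↦ ?_))
  rw [radialExtension_of_ne_zero U c (Real.exp_pos t).ne', Real.log_exp, Real.abs_exp, smul_eq_mul,
    ← Real.exp_mul, ← Real.exp_add, ← Real.exp_add]
  ring_nf

lemma contDiff_two_of_hasDerivAt (hU : ∀ t, HasDerivAt U (V t) t)
    (hV : ∀ t, HasDerivAt V (V' t) t) (hV' : Continuous V') : ContDiff ℝ 2 U := by
  have hV1 : ContDiff ℝ 1 V := contDiff_one_iff_deriv.2
    ⟨fun t ↦ (hV t).differentiableAt, by rwa [funext fun t ↦ (hV t).deriv]⟩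
  rw [← one_add_one_eq_two, contDiff_succ_iff_deriv, funext fun t ↦ (hU t).deriv]
  exact ⟨fun t ↦ (hU t).differentiableAt, by simp, hV1⟩

theorem IsSolutionFromBot.isIVPSolution {n : ℕ} {A : Matrix (Fin n) (Fin n) ℝ} {β c : Fin n → ℝ}
    {U V : ℝ → Fin n → ℝ}
    (h : IsSolutionFromBot (liouvilleField A fun j ↦ β j + 2) c U V) :
    IsIVPSolution A β c fun i ↦ radialExtension (fun t ↦ U t i) (c i) := by
  have hU (i : Fin n) (t : ℝ) : HasDerivAt (fun t ↦ U t i) (V t i) t :=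
    hasDerivAt_pi.1 (h.hasDerivAt t) i
  have hV (i : Fin n) (t : ℝ) := hasDerivAt_pi.1 (h.hasDerivAt_deriv t) i
  have hUcont : Continuous U := continuous_iff_continuousAt.2 fun t ↦ (h.hasDerivAt t).continuousAt
  have hfield : Continuous fun t ↦ liouvilleField A (fun j ↦ β j + 2) t (U t) :=
    (continuous_liouvilleField A _).comp (continuous_id.prodMk hUcont)
  refine ⟨fun i ↦ continuousWithinAt_radialExtension (tendsto_pi_nhds.1 h.tendsto i),
    fun i ↦ radialExtension_zero _ _, fun i r hr ↦ contDiffAt_radialExtension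
      (contDiff_two_of_hasDerivAt (hU i) (hV i) ((continuous_apply i).comp hfield)) hr.ne',
    fun i r hr ↦ ?_⟩
  rw [deriv_deriv_radialExtension_add (hU i) (hV i) hr.ne', liouvilleField, neg_div,
    Finset.sum_div, neg_add_eq_zero]
  refine Finset.sum_congr rfl fun j _ ↦ ?_
  simp only [exp_add_two_mul_log_add _ _ hr, radialExtension_of_ne_zero _ _ hr.ne']
  field_simp

end Radial

theorem existence_finite_energy_IVP_positive_diagonal_general {n : ℕ}
    {A : Matrix (Fin n) (Fin n) ℝ} {β : Fin n → ℝ} (hA : ∀ i j, 0 ≤ A i j)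
    (hβ : ∀ i, -2 < β i) (c : Fin n → ℝ) :
    ∃ u : Fin n → ℝ → ℝ, IsIVPSolution A β c u ∧
      ∀ i, 0 < A i i →
        IntegrableOn (fun r : ℝ ↦ Real.exp (u i r) * r ^ (β i + 1)) (Ioi 0) := by
  have hγ (i : Fin n) : 0 < β i + 2 := by linarith [hβ i]
  obtain ⟨U, V, h⟩ := exists_isSolutionFromBot_liouvilleField hA hγ c
  exact ⟨fun i ↦ radialExtension (fun t ↦ U t i) (c i), h.isIVPSolution, fun i hAi ↦
    (integrableOn_exp_radialExtension_mul_rpow_iff _ _ _).2 (h.integrable_exp hA hAi (hγ i))⟩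

theorem existence_finite_energy_IVP_positive_diagonal {n : ℕ} (hn : 0 < n)
    (A : Matrix (Fin n) (Fin n) ℝ) (β : Fin n → ℝ)
    (hA : H1 A) (hdiag : ∀ i, 0 < A i i) (hβ : ∀ i, -2 < β i)
    (c : Fin n → ℝ) :
    ∃ u : Fin n → ℝ → ℝ, IsIVPSolution A β c u ∧
      ∀ i, MeasureTheory.IntegrableOn
        (fun r : ℝ => Real.exp (u i r) * r ^ (β i + 1)) (Set.Ioi 0) := by
  obtain ⟨u, hu, henergy⟩ := existence_finite_energy_IVP_positive_diagonal_general hA.2.1 hβ c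
  exact ⟨u, hu, fun i ↦ henergy i (hdiag i)⟩
end
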